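/- arXiv:2505.10391 — 4 statements merged into one kernel-verified Lean document; each statement's English description precedes it below -/
import Mathlib

section
/- Let α, β, γ be real numbers with αβγ(1−α) ≠ 0. There is a constant C (depending only on α, β, γ) such that for all X > 0, H, M, N ≥ 1 with X ≤ MN, and all complex coefficients a_h, b_m with |a_h| ≤ 1, |b_m| ≤ 1, the sum 𝔗 := Σ_{h∼H} Σ_{m∼M} Σ_{n∼N} a_h b_m e(X h^α m^β n^γ / (H^α M^β N^γ)) satisfies |𝔗| ≤ C · log(2 + XHMN) · ( H M^{1/2} N^{1/2} + X^{−1/2} H M N + H^{1/2} M N ). -/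
open Finset

/-- `e(t) = exp(2πit)`. -/
noncomputable def eR (t : ℝ) : ℂ := Complex.exp (2 * Real.pi * Complex.I * t)

/-!
The sum is a bilinear form in `h` and `(m, n)` with kernel `e(X x y)`, where `x = (h/H)^α` and
`y = (m/M)^β (n/N)^γ`, and the Bombieri–Iwaniec double large sieve bounds it by the square root of
`X` times the number of pairs of `x` and the number of pairs of `y` at distance `O(1/X)`.

The double large sieve follows by rounding: for `x, y ∈ [0, 1)` the phase `K x y` differs from
`⌊K x⌋ ⌊K y⌋ / K` by two products of bounded quantities, whose exponential series separate the
variables at the cost of a constant factor, and the rounded form is controlled by Plancherel on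
`ℤ/Kℤ` and Cauchy–Schwarz.

The points `x` are spaced by `≫ 1/H`. For the points `y` take logarithms: the condition becomes
`β log (m/m') + γ log (n/n') ≪ 1/X`. Fractions `m/m'` with `gcd (m, m') = d` have numerator and
denominator `≪ M/d` in lowest terms, so there are `≪ (M/d)²` of them and their logarithms are
`≫ (d/M)²` apart; summing over the two gcds costs one logarithm each.
-/

lemma norm_eR (t : ℝ) : ‖eR t‖ = 1 := by
  have h : 2 * Real.pi * Complex.I * t = ((2 * Real.pi * t : ℝ) : ℂ) * Complex.I := by
    push_cast; ring
  rw [eR, h, Complex.norm_exp_ofReal_mul_I]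

lemma eR_add (s t : ℝ) : eR (s + t) = eR s * eR t := by
  simp only [eR, ← Complex.exp_add]
  push_cast
  ring_nf

lemma stdAddChar_intCast_mul (K : ℕ) [NeZero K] (m n : ℤ) :
    ZMod.stdAddChar ((m : ZMod K) * (n : ZMod K)) = eR (m * n / K) := by
  rw [← Int.cast_mul, ZMod.stdAddChar_coe, eR]
  push_cast
  ring_nf

/-- The bilinear form with kernel `k` on `s × t` is at most `R` at all coefficients from the
closed unit disc. -/
def IsBilinearBound {ι κ : Type*} (s : Finset ι) (t : Finset κ) (k : ι → κ → ℂ) (R : ℝ) : Prop :=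
  ∀ (a : ι → ℂ) (c : κ → ℂ), (∀ i ∈ s, ‖a i‖ ≤ 1) → (∀ j ∈ t, ‖c j‖ ≤ 1) →
    ‖∑ i ∈ s, ∑ j ∈ t, a i * c j * k i j‖ ≤ R

/-- The pairs of indices in `s` at which the values of `f` differ by at most `δ`. Pairs are ordered
and the diagonal is included, as in the spacing counts of the large sieve. -/
noncomputable def closePairs {ι : Type*} (s : Finset ι) (f : ι → ℝ) (δ : ℝ) : Finset (ι × ι) :=
  {p ∈ s ×ˢ s | |f p.1 - f p.2| ≤ δ}

section DoubleLargeSieve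

variable {ι κ : Type*} {s : Finset ι} {t : Finset κ}

namespace IsBilinearBound

variable {k : ι → κ → ℂ} {R R' : ℝ}

lemma mono (h : IsBilinearBound s t k R) (hR : R ≤ R') : IsBilinearBound s t k R' :=
  fun a c ha hc => (h a c ha hc).trans hR

lemma of_norm_le_one (hk : ∀ i ∈ s, ∀ j ∈ t, ‖k i j‖ ≤ 1) : IsBilinearBound s t k (#s * #t) := by
  intro a c ha hc
  calc ‖∑ i ∈ s, ∑ j ∈ t, a i * c j * k i j‖ ≤ ∑ _i ∈ s, ∑ _j ∈ t, (1 : ℝ) := by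
        refine norm_sum_le_of_le _ fun i hi => norm_sum_le_of_le _ fun j hj => ?_
        rw [norm_mul, norm_mul]
        exact mul_le_one₀ (mul_le_one₀ (ha i hi) (norm_nonneg _) (hc j hj)) (norm_nonneg _)
          (hk i hi j hj)
    _ = #s * #t := by simp only [sum_const, nsmul_eq_mul, mul_one]

-- The powers of `u` and `v` in the exponential series are absorbed into the coefficients.
lemma mul_exp (h : IsBilinearBound s t k R) (z : ℂ) {u : ι → ℂ} {v : κ → ℂ}
    (hu : ∀ i ∈ s, ‖u i‖ ≤ 1) (hv : ∀ j ∈ t, ‖v j‖ ≤ 1) :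
    IsBilinearBound s t (fun i j => k i j * Complex.exp (z * (u i * v j))) (Real.exp ‖z‖ * R) := by
  intro a c ha hc
  have hasSum_form : HasSum (fun l : ℕ => (z ^ l / l.factorial) *
      ∑ i ∈ s, ∑ j ∈ t, (a i * u i ^ l) * (c j * v j ^ l) * k i j)
      (∑ i ∈ s, ∑ j ∈ t, a i * c j * (k i j * Complex.exp (z * (u i * v j)))) := by
    simp only [mul_sum]
    refine hasSum_sum fun i _ => hasSum_sum fun j _ => ?_
    have := ((NormedSpace.expSeries_div_hasSum_exp (z * (u i * v j))).mul_left
      (k i j)).mul_left (a i * c j)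
    rw [← Complex.exp_eq_exp_ℂ] at this
    exact this.congr_fun fun l => by ring
  have hasSum_bound : HasSum (fun l : ℕ => ‖z‖ ^ l / l.factorial * R) (Real.exp ‖z‖ * R) := by
    have := (NormedSpace.expSeries_div_hasSum_exp ‖z‖).mul_right R
    rwa [← Real.exp_eq_exp_ℝ] at this
  have absorb {x w : ℂ} (l : ℕ) (hx : ‖x‖ ≤ 1) (hw : ‖w‖ ≤ 1) : ‖x * w ^ l‖ ≤ 1 := by
    rw [norm_mul, norm_pow]
    exact mul_le_one₀ hx (by positivity) (pow_le_one₀ (norm_nonneg _) hw)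
  rw [← hasSum_form.tsum_eq]
  refine tsum_of_norm_bounded hasSum_bound fun l => ?_
  rw [norm_mul, norm_div, norm_pow, Complex.norm_natCast]
  gcongr
  exact h _ _ (fun i hi => absorb l (ha i hi) (hu i hi)) fun j hj => absorb l (hc j hj) (hv j hj)

lemma mul_eR (h : IsBilinearBound s t k R) {u : ι → ℝ} {v : κ → ℝ}
    (hu : ∀ i ∈ s, |u i| ≤ 1) (hv : ∀ j ∈ t, |v j| ≤ 1) :
    IsBilinearBound s t (fun i j => k i j * eR (u i * v j)) (Real.exp (2 * Real.pi) * R) := by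
  have h' := h.mul_exp (2 * Real.pi * Complex.I) (u := fun i => (u i : ℂ))
    (v := fun j => (v j : ℂ)) (by simpa using hu) (by simpa using hv)
  simpa [eR, abs_of_pos Real.pi_pos] using h'

end IsBilinearBound

lemma sum_norm_sq_sum_mul_addChar {A : Type*} [CommRing A] [Fintype A] {ψ : AddChar A ℂ}
    (hψ : ψ.IsPrimitive) (f : A → ℂ) :
    ∑ r, ‖∑ x, f x * ψ (x * r)‖ ^ 2 = Fintype.card A * ∑ x, ‖f x‖ ^ 2 := by
  classical
  have expand (r : A) : ((‖∑ x, f x * ψ (x * r)‖ ^ 2 : ℝ) : ℂ) =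
      ∑ x, ∑ y, f x * (starRingEnd ℂ) (f y) * ψ (r * (x - y)) := by
    rw [Complex.ofReal_pow, ← Complex.mul_conj', map_sum, sum_mul_sum]
    refine sum_congr rfl fun x _ => sum_congr rfl fun y _ => ?_
    rw [map_mul (starRingEnd ℂ), ← AddChar.map_neg_eq_conj, mul_mul_mul_comm,
      ← AddChar.map_add_eq_mul]
    ring_nf
  have orthogonality (x : A) :
      ∑ y, ∑ r, f x * (starRingEnd ℂ) (f y) * ψ (r * (x - y)) = Fintype.card A * ‖f x‖ ^ 2 := by
    simp only [← mul_sum, AddChar.sum_mulShift _ hψ, sub_eq_zero, Nat.cast_ite, Nat.cast_zero,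
      mul_ite, mul_zero, sum_ite_eq, mem_univ, if_true, Complex.mul_conj']
    ring
  rw [← Complex.ofReal_inj, Complex.ofReal_sum, sum_congr rfl fun r _ => expand r, sum_comm,
    sum_congr rfl fun x _ => sum_comm, sum_congr rfl fun x _ => orthogonality x, ← mul_sum]
  push_cast
  rfl

lemma sum_norm_sq_sum_fiber_le {A : Type*} [Fintype A] [DecidableEq A] (p : ι → A) {a : ι → ℂ}
    (ha : ∀ i ∈ s, ‖a i‖ ≤ 1) :
    ∑ r, ‖∑ i ∈ s with p i = r, a i‖ ^ 2 ≤ #{x ∈ s ×ˢ s | p x.1 = p x.2} := by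
  have norm_fiber_le (r : A) : ‖∑ i ∈ s with p i = r, a i‖ ≤ #{i ∈ s | p i = r} := by
    simpa using norm_sum_le_of_le _ fun i hi => ha i (mem_filter.1 hi).1
  calc ∑ r, ‖∑ i ∈ s with p i = r, a i‖ ^ 2 ≤ ∑ r, (#{i ∈ s | p i = r} : ℝ) ^ 2 := by
        gcongr with r; exact norm_fiber_le r
    _ = ∑ r, (#{x ∈ {x ∈ s ×ˢ s | p x.1 = p x.2} | p x.1 = r} : ℝ) := by
        refine sum_congr rfl fun r _ => ?_
        rw [sq, ← Nat.cast_mul, ← card_product, ← filter_product, filter_filter]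
        congr 2
        ext x
        simp only [mem_filter]
        grind
    _ = #{x ∈ s ×ˢ s | p x.1 = p x.2} := by
        exact_mod_cast (card_eq_sum_card_fiberwise fun _ _ => by simp).symm

lemma isBilinearBound_addChar {A : Type*} [CommRing A] [Fintype A] [DecidableEq A]
    {ψ : AddChar A ℂ} (hψ : ψ.IsPrimitive) (p : ι → A) (q : κ → A) :
    IsBilinearBound s t (fun i j => ψ (p i * q j))
      √(Fintype.card A * #{x ∈ s ×ˢ s | p x.1 = p x.2} * #{y ∈ t ×ˢ t | q y.1 = q y.2}) := by
  intro a c ha hc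
  have sort_by_residue : ∑ i ∈ s, ∑ j ∈ t, a i * c j * ψ (p i * q j) =
      ∑ r, (∑ j ∈ t with q j = r, c j) * ∑ x, (∑ i ∈ s with p i = x, a i) * ψ (x * r) := by
    rw [sum_comm, ← sum_fiberwise t q]
    refine sum_congr rfl fun r _ => ?_
    rw [sum_mul]
    refine sum_congr rfl fun j hj => ?_
    rw [← sum_fiberwise s p, mul_sum]
    refine sum_congr rfl fun x _ => ?_
    rw [sum_mul, mul_sum]
    refine sum_congr rfl fun i hi => ?_
    rw [(mem_filter.1 hj).2, (mem_filter.1 hi).2]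
    ring
  refine Real.le_sqrt_of_sq_le ?_
  calc ‖∑ i ∈ s, ∑ j ∈ t, a i * c j * ψ (p i * q j)‖ ^ 2
      ≤ (∑ r, ‖∑ j ∈ t with q j = r, c j‖ *
          ‖∑ x, (∑ i ∈ s with p i = x, a i) * ψ (x * r)‖) ^ 2 := by
        rw [sort_by_residue]
        gcongr
        exact norm_sum_le_of_le _ fun r _ => norm_mul_le _ _
    _ ≤ (∑ r, ‖∑ j ∈ t with q j = r, c j‖ ^ 2) *
          ∑ r, ‖∑ x, (∑ i ∈ s with p i = x, a i) * ψ (x * r)‖ ^ 2 := sum_mul_sq_le_sq_mul_sq _ _ _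
    _ ≤ #{y ∈ t ×ˢ t | q y.1 = q y.2} *
          (Fintype.card A * #{x ∈ s ×ˢ s | p x.1 = p x.2}) := by
        rw [sum_norm_sq_sum_mul_addChar hψ]
        gcongr
        · exact sum_norm_sq_sum_fiber_le q hc
        · exact sum_norm_sq_sum_fiber_le p ha
    _ = _ := by ring

lemma abs_sub_le_of_intCast_floor_eq {K : ℕ} [NeZero K] {x x' : ℝ} (hx : x ∈ Set.Ico 0 1)
    (hx' : x' ∈ Set.Ico 0 1) (h : (⌊K * x⌋ : ZMod K) = ⌊K * x'⌋) : |x - x'| ≤ (K : ℝ)⁻¹ := by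
  have hK : (0 : ℝ) < K := by exact_mod_cast NeZero.pos K
  have emod_floor {y : ℝ} (hy : y ∈ Set.Ico 0 1) : ⌊K * y⌋ % (K : ℤ) = ⌊K * y⌋ := by
    refine Int.emod_eq_of_lt (Int.floor_nonneg.2 (mul_nonneg hK.le hy.1)) (Int.floor_lt.2 ?_)
    exact_mod_cast mul_lt_of_lt_one_right hK hy.2
  rw [ZMod.intCast_eq_intCast_iff', emod_floor hx, emod_floor hx'] at h
  have := (Int.abs_sub_lt_one_of_floor_eq_floor h).le
  rwa [← mul_sub, abs_mul, abs_of_pos hK, ← le_inv_mul_iff₀ hK, mul_one] at this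

lemma filter_intCast_floor_eq_subset_closePairs {K : ℕ} [NeZero K] {x : ι → ℝ}
    (hx : ∀ i ∈ s, x i ∈ Set.Ico 0 1) :
    {p ∈ s ×ˢ s | (⌊K * x p.1⌋ : ZMod K) = ⌊K * x p.2⌋} ⊆ closePairs s x (K : ℝ)⁻¹ := by
  intro p hp
  rw [mem_filter, mem_product] at hp
  exact mem_filter.2 ⟨mem_product.2 hp.1,
    abs_sub_le_of_intCast_floor_eq (hx _ hp.1.1) (hx _ hp.1.2) hp.2⟩

lemma isBilinearBound_eR_unit {K : ℕ} [NeZero K] {x : ι → ℝ} {y : κ → ℝ}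
    (hx : ∀ i ∈ s, x i ∈ Set.Ico 0 1) (hy : ∀ j ∈ t, y j ∈ Set.Ico 0 1) :
    IsBilinearBound s t (fun i j => eR (K * (x i * y j)))
      (Real.exp (2 * Real.pi) * (Real.exp (2 * Real.pi) *
        √(K * #(closePairs s x (K : ℝ)⁻¹) * #(closePairs t y (K : ℝ)⁻¹)))) := by
  have hK : (0 : ℝ) < K := by exact_mod_cast NeZero.pos K
  have fract_le_one (z : ℝ) : |Int.fract z| ≤ 1 := by
    rw [Int.abs_fract]; exact (Int.fract_lt_one z).le
  have abs_le_one {z : ℝ} (hz : z ∈ Set.Ico 0 1) : |z| ≤ 1 := by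
    rw [abs_of_nonneg hz.1]; exact hz.2.le
  have floor_div_le_one {z : ℝ} (hz : z ∈ Set.Ico 0 1) : |⌊K * z⌋ / (K : ℝ)| ≤ 1 := by
    have : (0 : ℝ) ≤ ⌊K * z⌋ := by exact_mod_cast Int.floor_nonneg.2 (mul_nonneg hK.le hz.1)
    rw [abs_of_nonneg (by positivity), div_le_one hK]
    exact (Int.floor_le _).trans (mul_le_of_le_one_right hK.le hz.2.le)
  -- `K x y = ⌊K x⌋ ⌊K y⌋ / K + {K x} y + (⌊K x⌋ / K) {K y}`
  have phase_eq (i : ι) (j : κ) : eR (K * (x i * y j)) =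
      ZMod.stdAddChar ((⌊K * x i⌋ : ZMod K) * (⌊K * y j⌋ : ZMod K)) *
        eR (Int.fract (K * x i) * y j) * eR (⌊K * x i⌋ / K * Int.fract (K * y j)) := by
    rw [stdAddChar_intCast_mul, ← eR_add, ← eR_add, Int.fract, Int.fract]
    congr 1
    field_simp
    ring
  have residues := isBilinearBound_addChar (s := s) (t := t) (ZMod.isPrimitive_stdAddChar K)
    (fun i => (⌊K * x i⌋ : ZMod K)) (fun j => (⌊K * y j⌋ : ZMod K))
  simp only [phase_eq]
  refine ((residues.mono ?_).mul_eR (fun i _ => fract_le_one _) fun j hj => abs_le_one (hy j hj)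
    ).mul_eR (fun i hi => floor_div_le_one (hx i hi)) fun j _ => fract_le_one _
  rw [ZMod.card]
  gcongr
  · exact filter_intCast_floor_eq_subset_closePairs hx
  · exact filter_intCast_floor_eq_subset_closePairs hy

lemma closePairs_subset_closePairs {f g : ι → ℝ} {δ δ' : ℝ}
    (h : ∀ i ∈ s, ∀ j ∈ s, |f i - f j| ≤ δ → |g i - g j| ≤ δ') :
    closePairs s f δ ⊆ closePairs s g δ' := by
  intro p hp
  rw [closePairs, mem_filter, mem_product] at hp ⊢
  exact ⟨hp.1, h _ hp.1.1 _ hp.1.2 hp.2⟩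

theorem double_large_sieve {X A B : ℝ} (hX : 0 < X) (hA : 0 < A) (hB : 0 < B) {x : ι → ℝ}
    {y : κ → ℝ} (hx : ∀ i ∈ s, x i ∈ Set.Ico 0 A) (hy : ∀ j ∈ t, y j ∈ Set.Ico 0 B) :
    IsBilinearBound s t (fun i j => eR (X * (x i * y j)))
      (Real.exp (4 * Real.pi) * √((X * A * B + 1) *
        #(closePairs s x (X * B)⁻¹) * #(closePairs t y (X * A)⁻¹))) := by
  set K := ⌈X * A * B⌉₊
  have hXAB : 0 < X * A * B := by positivity
  have hK_pos : 0 < K := Nat.ceil_pos.2 hXAB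
  have hK : X * A * B ≤ K := Nat.le_ceil _
  have hK_le : (K : ℝ) ≤ X * A * B + 1 := (Nat.ceil_lt_add_one hXAB.le).le
  have : NeZero K := ⟨hK_pos.ne'⟩
  have hK0 : (0 : ℝ) < K := by exact_mod_cast hK_pos
  have hx_unit (i) (hi : i ∈ s) : x i / A ∈ Set.Ico 0 1 :=
    ⟨div_nonneg (hx i hi).1 hA.le, (div_lt_one hA).2 (hx i hi).2⟩
  have hy_unit (j) (hj : j ∈ t) : X * A / K * y j ∈ Set.Ico 0 1 := by
    refine ⟨mul_nonneg (by positivity) (hy j hj).1, ?_⟩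
    rw [div_mul_eq_mul_div, div_lt_one hK0]
    exact (mul_lt_mul_of_pos_left (hy j hj).2 (by positivity)).trans_le hK
  have rescale (i j) : eR (X * (x i * y j)) = eR (K * (x i / A * (X * A / K * y j))) := by
    congr 1; field_simp
  have close_x : closePairs s (fun i => x i / A) (K : ℝ)⁻¹ ⊆ closePairs s x (X * B)⁻¹ := by
    refine closePairs_subset_closePairs fun i _ j _ h => ?_
    rw [← sub_div, abs_div, abs_of_pos hA, div_le_iff₀ hA] at h
    calc |x i - x j| ≤ (K : ℝ)⁻¹ * A := h
      _ ≤ (X * A * B)⁻¹ * A := by gcongr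
      _ = (X * B)⁻¹ := by field_simp
  have close_y : closePairs t (fun j => X * A / K * y j) (K : ℝ)⁻¹ ⊆
      closePairs t y (X * A)⁻¹ := by
    refine closePairs_subset_closePairs fun i _ j _ h => ?_
    rw [← mul_sub, abs_mul, abs_of_pos (by positivity)] at h
    calc |y i - y j| = (X * A / K * |y i - y j|) * (K / (X * A)) := by field_simp
      _ ≤ (K : ℝ)⁻¹ * (K / (X * A)) := by gcongr
      _ = (X * A)⁻¹ := by field_simp
  simp only [rescale]
  refine (isBilinearBound_eR_unit hx_unit hy_unit).mono ?_
  rw [← mul_assoc, ← Real.exp_add, ← add_mul]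
  norm_num only
  gcongr

end DoubleLargeSieve

section Separation

variable {ι κ : Type*} {S : Finset ι} {T : Finset κ} {f : ι → ℝ} {g : κ → ℝ} {σ τ δ : ℝ}

lemma card_le_of_pairwise_separated {c : ℝ} (hσ : 0 < σ) (hδ : 0 ≤ δ)
    (hf : ∀ i ∈ S, |f i - c| ≤ δ) (hsep : (S : Set ι).Pairwise fun i j => σ ≤ |f i - f j|) :
    (#S : ℝ) ≤ 1 + 2 * δ / σ := by
  have maps_to (i) (hi : i ∈ S) : ⌊(f i - (c - δ)) / σ⌋ ∈ Icc 0 ⌊2 * δ / σ⌋ := by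
    obtain ⟨hlow, hhigh⟩ := abs_le.1 (hf i hi)
    refine mem_Icc.2 ⟨Int.floor_nonneg.2 (div_nonneg (by linarith) hσ.le), Int.floor_le_floor ?_⟩
    gcongr
    linarith
  have inj_on : Set.InjOn (fun i => ⌊(f i - (c - δ)) / σ⌋) S := by
    intro i hi j hj hij
    by_contra hne
    have h := Int.abs_sub_lt_one_of_floor_eq_floor hij
    rw [← sub_div, sub_sub_sub_cancel_right, abs_div, abs_of_pos hσ, div_lt_one hσ] at h
    exact (hsep hi hj hne).not_gt h
  have hcard := card_le_card_of_injOn _ maps_to inj_on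
  rw [Int.card_Icc, sub_zero] at hcard
  have floor_nonneg : 0 ≤ ⌊2 * δ / σ⌋ := Int.floor_nonneg.2 (by positivity)
  calc (#S : ℝ) ≤ ((⌊2 * δ / σ⌋ + 1).toNat : ℤ) := by exact_mod_cast hcard
    _ = 1 + ⌊2 * δ / σ⌋ := by rw [Int.toNat_of_nonneg (by lia)]; push_cast; ring
    _ ≤ 1 + 2 * δ / σ := by gcongr; exact Int.floor_le _

lemma card_filter_abs_add_le (hσ : 0 < σ) (hδ : 0 ≤ δ)
    (hsep : (T : Set κ).Pairwise fun i j => σ ≤ |g i - g j|) :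
    (#{z ∈ S ×ˢ T | |f z.1 + g z.2| ≤ δ} : ℝ) ≤ #S * (1 + 2 * δ / σ) := by
  have card_row_le (i : ι) : (#{j ∈ T | |f i + g j| ≤ δ} : ℝ) ≤ 1 + 2 * δ / σ := by
    refine card_le_of_pairwise_separated (f := g) (c := -f i) hσ hδ (fun j hj => ?_)
      (hsep.mono (coe_subset.2 (filter_subset _ _)))
    rw [sub_neg_eq_add, add_comm]
    exact (mem_filter.1 hj).2
  calc (#{z ∈ S ×ˢ T | |f z.1 + g z.2| ≤ δ} : ℝ) = ∑ i ∈ S, (#{j ∈ T | |f i + g j| ≤ δ} : ℝ) := by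
        simp only [card_filter, sum_product, Nat.cast_sum]
    _ ≤ #S • (1 + 2 * δ / σ) := sum_le_card_nsmul _ _ _ fun i _ => card_row_le i
    _ = #S * (1 + 2 * δ / σ) := nsmul_eq_mul _ _

lemma card_closePairs_le_of_separated (hσ : 0 < σ) (hδ : 0 ≤ δ)
    (hsep : (S : Set ι).Pairwise fun i j => σ ≤ |f i - f j|) :
    (#(closePairs S f δ) : ℝ) ≤ #S * (1 + 2 * δ / σ) := by
  refine card_filter_abs_add_le (g := -f) hσ hδ (hsep.imp fun i j h => ?_)
  rwa [Pi.neg_apply, Pi.neg_apply, neg_sub_neg, abs_sub_comm]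

lemma card_filter_abs_add_comm :
    #{z ∈ S ×ˢ T | |f z.1 + g z.2| ≤ δ} = #{z ∈ T ×ˢ S | |g z.1 + f z.2| ≤ δ} :=
  card_equiv (Equiv.prodComm ι κ) fun z => by
    simp only [mem_filter, mem_product, Equiv.prodComm_apply, Prod.fst_swap, Prod.snd_swap,
      and_comm, add_comm]

lemma card_filter_abs_add_le_of_card_le_of_le {x y : ℝ} (hx : 0 < x) (hxy : x ≤ y) (hτ : 0 < τ)
    (hδ : 0 ≤ δ) (hS : #S ≤ x ^ 2)
    (hg : (T : Set κ).Pairwise fun i j => τ / y ^ 2 ≤ |g i - g j|) :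
    (#{z ∈ S ×ˢ T | |f z.1 + g z.2| ≤ δ} : ℝ) ≤ x * y + 2 * δ * (1 / τ) * (x * y) ^ 2 := by
  have hy : 0 < y := hx.trans_le hxy
  calc (#{z ∈ S ×ˢ T | |f z.1 + g z.2| ≤ δ} : ℝ) ≤ #S * (1 + 2 * δ / (τ / y ^ 2)) :=
        card_filter_abs_add_le (by positivity) hδ hg
    _ ≤ x ^ 2 * (1 + 2 * δ / (τ / y ^ 2)) := by gcongr
    _ = x * x + 2 * δ * (1 / τ) * (x * y) ^ 2 := by field_simp
    _ ≤ x * y + 2 * δ * (1 / τ) * (x * y) ^ 2 := by gcongr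

lemma card_filter_abs_add_le_of_card_le {x y : ℝ} (hx : 0 < x) (hy : 0 < y) (hσ : 0 < σ)
    (hτ : 0 < τ) (hδ : 0 ≤ δ) (hS : #S ≤ x ^ 2) (hT : #T ≤ y ^ 2)
    (hf : (S : Set ι).Pairwise fun i j => σ / x ^ 2 ≤ |f i - f j|)
    (hg : (T : Set κ).Pairwise fun i j => τ / y ^ 2 ≤ |g i - g j|) :
    (#{z ∈ S ×ˢ T | |f z.1 + g z.2| ≤ δ} : ℝ) ≤ x * y + 2 * δ * (1 / σ + 1 / τ) * (x * y) ^ 2 := by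
  rcases le_total x y with hxy | hyx
  · refine (card_filter_abs_add_le_of_card_le_of_le hx hxy hτ hδ hS hg).trans ?_
    gcongr
    exact le_add_of_nonneg_left (by positivity)
  · rw [card_filter_abs_add_comm, mul_comm x]
    refine (card_filter_abs_add_le_of_card_le_of_le hy hyx hσ hδ hT hf).trans ?_
    gcongr
    exact le_add_of_nonneg_right (by positivity)

end Separation

section LogComparison

variable {u v b B : ℝ}

lemma abs_sub_le_mul_abs_log_sub (hu : 0 < u) (hv : 0 < v) (huB : u ≤ B) (hvB : v ≤ B) :
    |u - v| ≤ B * |Real.log u - Real.log v| := by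
  wlog h : v ≤ u generalizing u v
  · rw [abs_sub_comm, abs_sub_comm (Real.log u)]
    exact this hv hu hvB huB (le_of_not_ge h)
  have hlog : Real.log v ≤ Real.log u := Real.log_le_log hv h
  rw [abs_of_nonneg (sub_nonneg.2 h), abs_of_nonneg (sub_nonneg.2 hlog)]
  calc u - v = u * (1 - (u / v)⁻¹) := by field_simp
    _ ≤ u * Real.log (u / v) := by gcongr; exact Real.one_sub_inv_le_log_of_pos (by positivity)
    _ = u * (Real.log u - Real.log v) := by rw [Real.log_div hu.ne' hv.ne']
    _ ≤ B * (Real.log u - Real.log v) := by gcongr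

lemma mul_abs_log_sub_le_abs_sub (hb : 0 < b) (hu : b ≤ u) (hv : b ≤ v) :
    b * |Real.log u - Real.log v| ≤ |u - v| := by
  wlog h : v ≤ u generalizing u v
  · rw [abs_sub_comm, abs_sub_comm u]
    exact this hv hu (le_of_not_ge h)
  have hv0 : 0 < v := hb.trans_le hv
  have hu0 : 0 < u := hb.trans_le hu
  have hlog : Real.log v ≤ Real.log u := Real.log_le_log hv0 h
  rw [abs_of_nonneg (sub_nonneg.2 h), abs_of_nonneg (sub_nonneg.2 hlog)]
  calc b * (Real.log u - Real.log v) ≤ v * (Real.log u - Real.log v) := by gcongr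
    _ = v * Real.log (u / v) := by rw [Real.log_div hu0.ne' hv0.ne']
    _ ≤ v * (u / v - 1) := by gcongr; exact Real.log_le_sub_one_of_pos (by positivity)
    _ = u - v := by field_simp

lemma inv_two_rpow_abs_le_rpow (hu : 1 ≤ u) (hu2 : u ≤ 2) (α : ℝ) : (2 ^ |α|)⁻¹ ≤ u ^ α :=
  calc ((2 : ℝ) ^ |α|)⁻¹ = 2 ^ (-|α|) := (Real.rpow_neg zero_le_two _).symm
    _ ≤ u ^ (-|α|) := Real.rpow_le_rpow_of_nonpos (by linarith) hu2 (by simp)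
    _ ≤ u ^ α := Real.rpow_le_rpow_of_exponent_le hu (neg_abs_le α)

lemma rpow_le_two_rpow_abs (hu : 1 ≤ u) (hu2 : u ≤ 2) (α : ℝ) : u ^ α ≤ 2 ^ |α| :=
  calc u ^ α ≤ u ^ |α| := Real.rpow_le_rpow_of_exponent_le hu (le_abs_self α)
    _ ≤ 2 ^ |α| := Real.rpow_le_rpow (by linarith) hu2 (abs_nonneg α)

end LogComparison

/-- The integers `n ∼ N`, that is, those in the interval `(N, 2N]`. -/
noncomputable def dyadic (N : ℝ) : Finset ℕ := Ioc ⌊N⌋₊ ⌊2 * N⌋₊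

section Dyadic

variable {H M N : ℝ}

lemma mem_dyadic (hN : 0 ≤ N) {n : ℕ} : n ∈ dyadic N ↔ N < n ∧ (n : ℝ) ≤ 2 * N := by
  rw [dyadic, mem_Ioc, Nat.floor_lt hN, Nat.le_floor_iff (by positivity)]

lemma div_mem_Icc_of_mem_dyadic (hN : 0 < N) {n : ℕ} (hn : n ∈ dyadic N) :
    1 ≤ (n : ℝ) / N ∧ (n : ℝ) / N ≤ 2 := by
  obtain ⟨hlow, hhigh⟩ := (mem_dyadic hN.le).1 hn
  exact ⟨(one_le_div hN).2 hlow.le, (div_le_iff₀ hN).2 hhigh⟩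

lemma card_dyadic_le (hN : 0 ≤ N) : (#(dyadic N) : ℝ) ≤ 2 * N := by
  rw [dyadic, Nat.card_Ioc]
  calc ((⌊2 * N⌋₊ - ⌊N⌋₊ : ℕ) : ℝ) ≤ ⌊2 * N⌋₊ := by exact_mod_cast Nat.sub_le _ _
    _ ≤ 2 * N := Nat.floor_le (by positivity)

lemma pairwise_separated_rpow_dyadic (hH : 0 < H) (α : ℝ) :
    (dyadic H : Set ℕ).Pairwise fun i j =>
      |α| / (2 * H * 2 ^ |α|) ≤ |((i : ℝ) / H) ^ α - ((j : ℝ) / H) ^ α| := by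
  intro i hi j hj hij
  obtain ⟨hi1, hi2⟩ := div_mem_Icc_of_mem_dyadic hH hi
  obtain ⟨hj1, hj2⟩ := div_mem_Icc_of_mem_dyadic hH hj
  have one_le_abs_sub : (1 : ℝ) ≤ |(i : ℝ) - j| := by
    exact_mod_cast Int.one_le_abs (sub_ne_zero.2 (Nat.cast_injective.ne hij : (i : ℤ) ≠ j))
  have hlog := abs_sub_le_mul_abs_log_sub (by linarith) (by linarith) hi2 hj2
  rw [← sub_div, abs_div, abs_of_pos hH] at hlog
  calc |α| / (2 * H * 2 ^ |α|) = (2 ^ |α|)⁻¹ * (|α| * (1 / H / 2)) := by field_simp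
    _ ≤ (2 ^ |α|)⁻¹ * (|α| * |Real.log (i / H) - Real.log (j / H)|) := by
        gcongr
        rw [div_le_iff₀' two_pos]
        exact le_trans (by gcongr) hlog
    _ = (2 ^ |α|)⁻¹ * |Real.log ((i / H) ^ α) - Real.log ((j / H) ^ α)| := by
        rw [Real.log_rpow (by linarith), Real.log_rpow (by linarith), ← mul_sub, abs_mul]
    _ ≤ |((i : ℝ) / H) ^ α - ((j : ℝ) / H) ^ α| :=
        mul_abs_log_sub_le_abs_sub (by positivity) (inv_two_rpow_abs_le_rpow hi1 hi2 α)
          (inv_two_rpow_abs_le_rpow hj1 hj2 α)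

lemma exists_card_closePairs_rpow_le {α : ℝ} (hα : α ≠ 0) :
    ∃ C : ℝ, 0 < C ∧ ∀ H δ : ℝ, 0 < H → 0 ≤ δ →
      #(closePairs (dyadic H) (fun h => ((h : ℝ) / H) ^ α) δ) ≤ C * (H * (1 + H * δ)) := by
  have := abs_pos.2 hα
  refine ⟨2 * (1 + 4 * 2 ^ |α| / |α|), by positivity, fun H δ hH hδ => ?_⟩
  calc (#(closePairs (dyadic H) (fun h => ((h : ℝ) / H) ^ α) δ) : ℝ)
      ≤ #(dyadic H) * (1 + 2 * δ / (|α| / (2 * H * 2 ^ |α|))) :=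
        card_closePairs_le_of_separated (by positivity) hδ (pairwise_separated_rpow_dyadic hH α)
    _ ≤ 2 * H * (1 + 2 * δ / (|α| / (2 * H * 2 ^ |α|))) := by
        gcongr; exact card_dyadic_le hH.le
    _ = 2 * H * (1 * 1 + 4 * 2 ^ |α| / |α| * (H * δ)) := by field_simp; ring
    _ ≤ 2 * H * ((1 + 4 * 2 ^ |α| / |α|) * 1 + (1 + 4 * 2 ^ |α| / |α|) * (H * δ)) := by
        gcongr
        · exact le_add_of_nonneg_right (by positivity)
        · exact le_add_of_nonneg_left zero_le_one
    _ = 2 * (1 + 4 * 2 ^ |α| / |α|) * (H * (1 + H * δ)) := by ring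

/-- The pairs of integers `∼ N` with greatest common divisor `d`, the classes within which the
ratios of the entries are well spaced. -/
noncomputable def gcdPairs (N : ℝ) (d : ℕ) : Finset (ℕ × ℕ) :=
  {p ∈ dyadic N ×ˢ dyadic N | p.1.gcd p.2 = d}

/-- The logarithm of the ratio `p.1 / p.2`, for pairs of positive integers. -/
noncomputable def logRatio (p : ℕ × ℕ) : ℝ := Real.log p.1 - Real.log p.2

lemma eq_of_gcd_eq_of_mul_eq_mul {x y z w : ℕ} (hpos : 0 < x.gcd y) (hgcd : x.gcd y = z.gcd w)
    (h : x * w = z * y) : x = z ∧ y = w := by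
  constructor <;> refine Nat.eq_of_mul_eq_mul_right hpos ?_
  · calc x * x.gcd y = (z * x).gcd (z * y) := by
          rw [hgcd, ← Nat.gcd_mul_left, h, Nat.mul_comm x z]
      _ = z * x.gcd y := Nat.gcd_mul_left _ _ _
  · calc y * x.gcd y = (w * x).gcd (w * y) := by
          rw [hgcd, ← Nat.gcd_mul_left, Nat.mul_comm y z, ← h, Nat.mul_comm x w, Nat.mul_comm y w]
      _ = w * x.gcd y := Nat.gcd_mul_left _ _ _

lemma card_gcdPairs_le (hN : 0 ≤ N) {d : ℕ} (hd : 0 < d) :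
    (#(gcdPairs N d) : ℝ) ≤ (2 * N / d) ^ 2 := by
  have hsub : gcdPairs N d ⊆
      {n ∈ Ioc 0 ⌊2 * N⌋₊ | d ∣ n} ×ˢ {n ∈ Ioc 0 ⌊2 * N⌋₊ | d ∣ n} := by
    intro p hp
    simp only [gcdPairs, dyadic, mem_filter, mem_product, mem_Ioc] at hp ⊢
    obtain ⟨⟨h1, h2⟩, rfl⟩ := hp
    exact ⟨⟨⟨by lia, h1.2⟩, Nat.gcd_dvd_left _ _⟩, ⟨by lia, h2.2⟩, Nat.gcd_dvd_right _ _⟩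
  have hcard := card_le_card hsub
  rw [card_product, Nat.Ioc_filter_dvd_card_eq_div, ← sq] at hcard
  calc (#(gcdPairs N d) : ℝ) ≤ ((⌊2 * N⌋₊ / d : ℕ) : ℝ) ^ 2 := by exact_mod_cast hcard
    _ ≤ (2 * N / d) ^ 2 := by
        gcongr
        refine Nat.cast_div_le.trans ?_
        gcongr
        exact Nat.floor_le (by positivity)

lemma pairwise_separated_logRatio (hN : 0 < N) {d : ℕ} (hd : 0 < d) :
    (gcdPairs N d : Set (ℕ × ℕ)).Pairwise fun p q =>
      1 / (2 * N / d) ^ 2 ≤ |logRatio p - logRatio q| := by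
  rintro ⟨x, y⟩ hp ⟨z, w⟩ hq hne
  simp only [mem_coe, gcdPairs, mem_filter, mem_product, mem_dyadic hN.le] at hp hq
  obtain ⟨⟨⟨hx, hx2⟩, hy, hy2⟩, hxy⟩ := hp
  obtain ⟨⟨⟨hz, hz2⟩, hw, hw2⟩, hzw⟩ := hq
  replace hx := hN.trans hx
  replace hy := hN.trans hy
  replace hz := hN.trans hz
  replace hw := hN.trans hw
  have cross_ne : x * w ≠ z * y := fun h => hne <| by
    obtain ⟨rfl, rfl⟩ := eq_of_gcd_eq_of_mul_eq_mul (hxy ▸ hd) (hxy.trans hzw.symm) h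
    rfl
  have sq_dvd_cross : (d ^ 2 : ℤ) ∣ x * w - z * y := by
    rw [sq]
    refine dvd_sub ?_ ?_ <;> norm_cast <;> apply mul_dvd_mul
    · exact hxy ▸ Nat.gcd_dvd_left _ _
    · exact hzw ▸ Nat.gcd_dvd_right _ _
    · exact hzw ▸ Nat.gcd_dvd_left _ _
    · exact hxy ▸ Nat.gcd_dvd_right _ _
  have sq_le_cross : (d ^ 2 : ℝ) ≤ |(x * w - z * y : ℝ)| := by
    exact_mod_cast Int.le_of_dvd (abs_pos.2 (sub_ne_zero.2 (by exact_mod_cast cross_ne)))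
      ((dvd_abs _ _).2 sq_dvd_cross)
  have log_cross : Real.log (x * w) - Real.log (z * y) = logRatio (x, y) - logRatio (z, w) := by
    rw [Real.log_mul hx.ne' hw.ne', Real.log_mul hz.ne' hy.ne', logRatio, logRatio]
    ring
  rw [div_pow, one_div_div, div_le_iff₀' (by positivity), ← log_cross, sq (2 * N)]
  exact sq_le_cross.trans (abs_sub_le_mul_abs_log_sub (by positivity) (by positivity)
    (by gcongr) (by gcongr))

lemma pairwise_separated_mul_logRatio (hN : 0 < N) {d : ℕ} (hd : 0 < d) (γ : ℝ) :
    (gcdPairs N d : Set (ℕ × ℕ)).Pairwise fun p q =>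
      |γ| / (2 * N / d) ^ 2 ≤ |γ * logRatio p - γ * logRatio q| := by
  refine (pairwise_separated_logRatio hN hd).imp fun p q h => ?_
  rw [← mul_sub, abs_mul, ← mul_one_div]
  gcongr

variable {β γ δ : ℝ}

lemma card_gcdPairs_filter_abs_add_le (hM : 0 < M) (hN : 0 < N) (hβ : β ≠ 0) (hγ : γ ≠ 0)
    (hδ : 0 ≤ δ) {d e : ℕ} (hd : 0 < d) (he : 0 < e) :
    (#{z ∈ gcdPairs M d ×ˢ gcdPairs N e | |β * logRatio z.1 + γ * logRatio z.2| ≤ δ} : ℝ) ≤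
      (4 * (M * N) + 32 * δ * (1 / |β| + 1 / |γ|) * (M * N) ^ 2) * ((d : ℝ)⁻¹ * (e : ℝ)⁻¹) := by
  set u : ℝ := (d : ℝ)⁻¹ * (e : ℝ)⁻¹
  have hu : 0 ≤ u := by positivity
  have hu1 : u ≤ 1 := mul_le_one₀ (Nat.cast_inv_le_one d) (by positivity) (Nat.cast_inv_le_one e)
  have box_eq : 2 * M / d * (2 * N / e) = 4 * (M * N) * u := by simp only [u]; ring
  calc (#{z ∈ gcdPairs M d ×ˢ gcdPairs N e | |β * logRatio z.1 + γ * logRatio z.2| ≤ δ} : ℝ)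
      ≤ 4 * (M * N) * u + 2 * δ * (1 / |β| + 1 / |γ|) * (4 * (M * N) * u) ^ 2 := by
        rw [← box_eq]
        exact card_filter_abs_add_le_of_card_le (f := fun p => β * logRatio p)
          (g := fun p => γ * logRatio p) (by positivity) (by positivity) (abs_pos.2 hβ)
          (abs_pos.2 hγ) hδ (card_gcdPairs_le hM.le hd) (card_gcdPairs_le hN.le he)
          (pairwise_separated_mul_logRatio hM hd β) (pairwise_separated_mul_logRatio hN he γ)
    _ = 4 * (M * N) * u + 32 * δ * (1 / |β| + 1 / |γ|) * (M * N) ^ 2 * u ^ 2 := by ring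
    _ ≤ 4 * (M * N) * u + 32 * δ * (1 / |β| + 1 / |γ|) * (M * N) ^ 2 * u := by
        gcongr
        exact pow_le_of_le_one hu hu1 two_ne_zero
    _ = (4 * (M * N) + 32 * δ * (1 / |β| + 1 / |γ|) * (M * N) ^ 2) * u := by ring

lemma gcd_mem_Icc_of_mem_dyadic {m n : ℕ} (hm : m ∈ dyadic M) : m.gcd n ∈ Icc 1 ⌊2 * M⌋₊ := by
  rw [dyadic, mem_Ioc] at hm
  have hpos : 0 < m := by lia
  exact mem_Icc.2 ⟨Nat.gcd_pos_of_pos_left _ hpos, (Nat.gcd_le_left _ hpos).trans hm.2⟩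

lemma sum_Icc_floor_inv_le {x : ℝ} (hx : 1 ≤ x) :
    ∑ d ∈ Icc 1 ⌊x⌋₊, (d : ℝ)⁻¹ ≤ 1 + Real.log x := by
  simpa [harmonic_eq_sum_Icc] using harmonic_floor_le_one_add_log x hx

lemma card_closePairs_log_le (hM : 1 ≤ M) (hN : 1 ≤ N) (hβ : β ≠ 0) (hγ : γ ≠ 0) (hδ : 0 ≤ δ) :
    (#(closePairs (dyadic M ×ˢ dyadic N)
        (fun p => β * Real.log p.1 + γ * Real.log p.2) δ) : ℝ) ≤
      (4 * (M * N) + 32 * δ * (1 / |β| + 1 / |γ|) * (M * N) ^ 2) *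
        ((1 + Real.log (2 * M)) * (1 + Real.log (2 * N))) := by
  set S := closePairs (dyadic M ×ˢ dyadic N) (fun p => β * Real.log p.1 + γ * Real.log p.2) δ
  set gcds : (ℕ × ℕ) × ℕ × ℕ → ℕ × ℕ := fun x => (x.1.1.gcd x.2.1, x.1.2.gcd x.2.2)
  have gcds_mem (x) (hx : x ∈ S) : gcds x ∈ Icc 1 ⌊2 * M⌋₊ ×ˢ Icc 1 ⌊2 * N⌋₊ := by
    simp only [S, closePairs, mem_filter, mem_product] at hx
    exact mem_product.2 ⟨gcd_mem_Icc_of_mem_dyadic hx.1.1.1, gcd_mem_Icc_of_mem_dyadic hx.1.1.2⟩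
  have card_fiber_le (d e : ℕ) : #{x ∈ S | gcds x = (d, e)} ≤
      #{z ∈ gcdPairs M d ×ˢ gcdPairs N e | |β * logRatio z.1 + γ * logRatio z.2| ≤ δ} := by
    refine card_le_card_of_injOn (Equiv.prodProdProdComm ℕ ℕ ℕ ℕ) (fun x hx => ?_)
      (Equiv.injective _).injOn
    simp only [S, gcds, closePairs, coe_filter, mem_filter, mem_product, Set.mem_ofPred_eq,
      Prod.mk.injEq] at hx
    obtain ⟨⟨⟨⟨hm, hn⟩, hm', hn'⟩, hclose⟩, hd, he⟩ := hx
    refine mem_filter.2 ⟨mem_product.2 ⟨mem_filter.2 ⟨mem_product.2 ⟨hm, hm'⟩, hd⟩,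
      mem_filter.2 ⟨mem_product.2 ⟨hn, hn'⟩, he⟩⟩, le_of_eq_of_le ?_ hclose⟩
    simp only [logRatio, Equiv.prodProdProdComm_apply]
    ring_nf
  calc (#S : ℝ) = ∑ z ∈ Icc 1 ⌊2 * M⌋₊ ×ˢ Icc 1 ⌊2 * N⌋₊, (#{x ∈ S | gcds x = z} : ℝ) := by
        exact_mod_cast card_eq_sum_card_fiberwise gcds_mem
    _ ≤ ∑ z ∈ Icc 1 ⌊2 * M⌋₊ ×ˢ Icc 1 ⌊2 * N⌋₊,
          (4 * (M * N) + 32 * δ * (1 / |β| + 1 / |γ|) * (M * N) ^ 2) *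
            ((z.1 : ℝ)⁻¹ * (z.2 : ℝ)⁻¹) := by
        refine sum_le_sum fun z hz => (Nat.cast_le.2 (card_fiber_le z.1 z.2)).trans ?_
        rw [mem_product, mem_Icc, mem_Icc] at hz
        exact card_gcdPairs_filter_abs_add_le (by positivity) (by positivity) hβ hγ hδ hz.1.1
          hz.2.1
    _ = (4 * (M * N) + 32 * δ * (1 / |β| + 1 / |γ|) * (M * N) ^ 2) *
          ((∑ d ∈ Icc 1 ⌊2 * M⌋₊, (d : ℝ)⁻¹) * ∑ e ∈ Icc 1 ⌊2 * N⌋₊, (e : ℝ)⁻¹) := by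
        rw [← mul_sum, sum_mul_sum, sum_product]
    _ ≤ _ := by
        have := Real.log_nonneg (show 1 ≤ 2 * M by linarith)
        gcongr
        · exact sum_Icc_floor_inv_le (by linarith)
        · exact sum_Icc_floor_inv_le (by linarith)

lemma closePairs_monomial_subset (hM : 0 < M) (hN : 0 < N) (β γ δ : ℝ) :
    closePairs (dyadic M ×ˢ dyadic N) (fun p => ((p.1 : ℝ) / M) ^ β * ((p.2 : ℝ) / N) ^ γ) δ ⊆
      closePairs (dyadic M ×ˢ dyadic N) (fun p => β * Real.log p.1 + γ * Real.log p.2)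
        (2 ^ |β| * 2 ^ |γ| * δ) := by
  have ratios_mem {p : ℕ × ℕ} (hp : p ∈ dyadic M ×ˢ dyadic N) :=
    (mem_product.1 hp).imp (div_mem_Icc_of_mem_dyadic hM) (div_mem_Icc_of_mem_dyadic hN)
  have monomial_ge {p} (hp : p ∈ dyadic M ×ˢ dyadic N) :
      (2 ^ |β| * 2 ^ |γ|)⁻¹ ≤ ((p.1 : ℝ) / M) ^ β * ((p.2 : ℝ) / N) ^ γ := by
    obtain ⟨⟨hm1, hm2⟩, hn1, hn2⟩ := ratios_mem hp
    rw [mul_inv]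
    exact mul_le_mul (inv_two_rpow_abs_le_rpow hm1 hm2 β) (inv_two_rpow_abs_le_rpow hn1 hn2 γ)
      (by positivity) (by positivity)
  have log_monomial {p} (hp : p ∈ dyadic M ×ˢ dyadic N) :
      Real.log (((p.1 : ℝ) / M) ^ β * ((p.2 : ℝ) / N) ^ γ) =
        (β * Real.log p.1 + γ * Real.log p.2) - (β * Real.log M + γ * Real.log N) := by
    obtain ⟨⟨hm1, -⟩, hn1, -⟩ := ratios_mem hp
    have hm : (0 : ℝ) < p.1 := hM.trans_le ((one_le_div hM).1 hm1)
    have hn : (0 : ℝ) < p.2 := hN.trans_le ((one_le_div hN).1 hn1)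
    rw [Real.log_mul (by positivity) (by positivity), Real.log_rpow (by positivity),
      Real.log_rpow (by positivity), Real.log_div hm.ne' hM.ne', Real.log_div hn.ne' hN.ne']
    ring
  refine closePairs_subset_closePairs fun p hp q hq hclose => ?_
  have hlog := mul_abs_log_sub_le_abs_sub (by positivity) (monomial_ge hp) (monomial_ge hq)
  rw [log_monomial hp, log_monomial hq, sub_sub_sub_cancel_right,
    inv_mul_le_iff₀ (by positivity)] at hlog
  exact hlog.trans (by gcongr)

lemma exists_card_closePairs_monomial_le (hβ : β ≠ 0) (hγ : γ ≠ 0) :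
    ∃ C : ℝ, 0 < C ∧ ∀ M N δ : ℝ, 1 ≤ M → 1 ≤ N → 0 ≤ δ →
      #(closePairs (dyadic M ×ˢ dyadic N)
          (fun p => ((p.1 : ℝ) / M) ^ β * ((p.2 : ℝ) / N) ^ γ) δ) ≤
        C * (M * N * (1 + M * N * δ)) * ((1 + Real.log (2 * M)) * (1 + Real.log (2 * N))) := by
  set D : ℝ := 32 * (2 ^ |β| * 2 ^ |γ|) * (1 / |β| + 1 / |γ|)
  have hD : 0 ≤ D := by positivity
  refine ⟨4 + D, by positivity, fun M N δ hM hN hδ => ?_⟩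
  have := Real.log_nonneg (show 1 ≤ 2 * M by linarith)
  have := Real.log_nonneg (show 1 ≤ 2 * N by linarith)
  refine (Nat.cast_le.2 (card_le_card (closePairs_monomial_subset (by positivity) (by positivity)
    β γ δ))).trans ((card_closePairs_log_le hM hN hβ hγ (by positivity)).trans ?_)
  gcongr
  calc 4 * (M * N) + 32 * (2 ^ |β| * 2 ^ |γ| * δ) * (1 / |β| + 1 / |γ|) * (M * N) ^ 2
      = 4 * (M * N) + D * (M * N * (M * N * δ)) := by ring
    _ ≤ (4 + D) * (M * N) + (4 + D) * (M * N * (M * N * δ)) := by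
        gcongr
        · exact le_add_of_nonneg_right hD
        · exact le_add_of_nonneg_left zero_le_four
    _ = (4 + D) * (M * N * (1 + M * N * δ)) := by ring

end Dyadic

section Monomial

variable {α β γ X H M N : ℝ}

lemma half_le_log_two_add {x : ℝ} (hx : 0 ≤ x) : 1 / 2 ≤ Real.log (2 + x) := by
  have : Real.log 2 ≤ Real.log (2 + x) := Real.log_le_log two_pos (by linarith)
  linarith [Real.log_two_gt_d9]

lemma one_add_log_two_mul_le {x y : ℝ} (hx : 1 ≤ x) (hxy : x ≤ y) :
    1 + Real.log (2 * x) ≤ 4 * Real.log (2 + y) := by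
  have : Real.log 2 ≤ Real.log (2 + y) := Real.log_le_log two_pos (by linarith)
  have : Real.log x ≤ Real.log (2 + y) := Real.log_le_log (by linarith) (by linarith)
  rw [Real.log_mul two_ne_zero (by linarith)]
  linarith [Real.log_two_gt_d9]

lemma rpow_div_mem_Ico_of_mem_dyadic (hN : 0 < N) (α : ℝ) {n : ℕ} (hn : n ∈ dyadic N) :
    ((n : ℝ) / N) ^ α ∈ Set.Ico 0 (2 * 2 ^ |α|) := by
  obtain ⟨h1, h2⟩ := div_mem_Icc_of_mem_dyadic hN hn
  have : (0 : ℝ) < 2 ^ |α| := by positivity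
  exact ⟨by positivity, by linarith [rpow_le_two_rpow_abs h1 h2 α]⟩

lemma one_add_log_mul_one_add_log_le (hX : 1 ≤ X) (hH : 1 ≤ H) (hM : 1 ≤ M) (hN : 1 ≤ N) :
    (1 + Real.log (2 * M)) * (1 + Real.log (2 * N)) ≤ (4 * Real.log (2 + X * H * M * N)) ^ 2 := by
  have := Real.log_nonneg (show 1 ≤ 2 * M by linarith)
  have := Real.log_nonneg (show 1 ≤ 2 * N by linarith)
  have hXH : 1 ≤ X * H := one_le_mul_of_one_le_of_one_le hX hH
  rw [sq]
  refine mul_le_mul (one_add_log_two_mul_le hM ?_) (one_add_log_two_mul_le hN ?_) (by positivity)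
    (by linarith [half_le_log_two_add (x := X * H * M * N) (by positivity)])
  · exact (le_mul_of_one_le_left (by positivity) hXH).trans
      (le_mul_of_one_le_right (by positivity) hN)
  · exact le_mul_of_one_le_left (by positivity) (one_le_mul_of_one_le_of_one_le hXH hM)

/-- The kernel `e(X (h/H)^α (m/M)^β (n/N)^γ)`, as a bilinear kernel in `h` and `p = (m, n)`. -/
noncomputable def monomialKernel (α β γ X H M N : ℝ) (h : ℕ) (p : ℕ × ℕ) : ℂ :=
  eR (X * (((h : ℝ) / H) ^ α * (((p.1 : ℝ) / M) ^ β * ((p.2 : ℝ) / N) ^ γ)))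

lemma isBilinearBound_monomialKernel (hX : 0 < X) (hH : 0 < H) (hM : 0 < M) (hN : 0 < N) :
    IsBilinearBound (dyadic H) (dyadic M ×ˢ dyadic N) (monomialKernel α β γ X H M N)
      (Real.exp (4 * Real.pi) * √((X * (2 * 2 ^ |α|) * (2 * 2 ^ |β| * (2 * 2 ^ |γ|)) + 1) *
        #(closePairs (dyadic H) (fun h => ((h : ℝ) / H) ^ α) X⁻¹) *
        #(closePairs (dyadic M ×ˢ dyadic N)
          (fun p => ((p.1 : ℝ) / M) ^ β * ((p.2 : ℝ) / N) ^ γ) X⁻¹))) := by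
  have mem_mn (p) (hp : p ∈ dyadic M ×ˢ dyadic N) :
      ((p.1 : ℝ) / M) ^ β * ((p.2 : ℝ) / N) ^ γ ∈ Set.Ico 0 (2 * 2 ^ |β| * (2 * 2 ^ |γ|)) := by
    obtain ⟨hm, hn⟩ := mem_product.1 hp
    have hm := rpow_div_mem_Ico_of_mem_dyadic hM β hm
    have hn := rpow_div_mem_Ico_of_mem_dyadic hN γ hn
    exact ⟨mul_nonneg hm.1 hn.1, mul_lt_mul'' hm.2 hn.2 hm.1 hn.1⟩
  have one_le (x : ℝ) : (1 : ℝ) ≤ 2 * 2 ^ |x| := by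
    linarith [Real.one_le_rpow one_le_two (abs_nonneg x)]
  have inv_le {B : ℝ} (hB : 1 ≤ B) : (X * B)⁻¹ ≤ X⁻¹ := by
    gcongr
    exact le_mul_of_one_le_right hX.le hB
  refine (double_large_sieve hX (by positivity) (by positivity)
    (fun h hh => rpow_div_mem_Ico_of_mem_dyadic hH α hh) mem_mn).mono ?_
  gcongr
  · exact closePairs_subset_closePairs fun i _ j _ h =>
      h.trans (inv_le (one_le_mul_of_one_le_of_one_le (one_le β) (one_le γ)))
  · exact closePairs_subset_closePairs fun i _ j _ h => h.trans (inv_le (one_le α))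

lemma exists_isBilinearBound_monomialKernel_of_one_le (hα : α ≠ 0) (hβ : β ≠ 0) (hγ : γ ≠ 0) :
    ∃ C : ℝ, 0 < C ∧ ∀ X H M N : ℝ, 1 ≤ X → 1 ≤ H → 1 ≤ M → 1 ≤ N →
      IsBilinearBound (dyadic H) (dyadic M ×ˢ dyadic N) (monomialKernel α β γ X H M N)
        (C * Real.log (2 + X * H * M * N) * √((H * X + H ^ 2) * (M * N + (M * N) ^ 2 / X))) := by
  obtain ⟨C₁, hC₁, card_h_le⟩ := exists_card_closePairs_rpow_le hα
  obtain ⟨C₂, hC₂, card_mn_le⟩ := exists_card_closePairs_monomial_le hβ hγ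
  set D : ℝ := 2 * 2 ^ |α| * (2 * 2 ^ |β| * (2 * 2 ^ |γ|)) + 1
  have hD : 0 < D := by positivity
  refine ⟨Real.exp (4 * Real.pi) * (√(D * C₁ * C₂) * 4), by positivity, ?_⟩
  intro X H M N hX hH hM hN
  set L := Real.log (2 + X * H * M * N)
  have hL : 0 ≤ L := by linarith [half_le_log_two_add (x := X * H * M * N) (by positivity)]
  have modulus_le : X * (2 * 2 ^ |α|) * (2 * 2 ^ |β| * (2 * 2 ^ |γ|)) + 1 ≤ X * D := by
    simp only [D, mul_add, mul_one, mul_assoc]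
    gcongr
  refine (isBilinearBound_monomialKernel (by positivity) (by positivity) (by positivity)
    (by positivity)).mono ?_
  rw [mul_assoc (Real.exp _), mul_assoc (Real.exp _)]
  refine mul_le_mul_of_nonneg_left (Real.sqrt_le_iff.2 ⟨by positivity, ?_⟩) (Real.exp_nonneg _)
  calc (X * (2 * 2 ^ |α|) * (2 * 2 ^ |β| * (2 * 2 ^ |γ|)) + 1) *
        #(closePairs (dyadic H) (fun h => ((h : ℝ) / H) ^ α) X⁻¹) *
        #(closePairs (dyadic M ×ˢ dyadic N)
          (fun p => ((p.1 : ℝ) / M) ^ β * ((p.2 : ℝ) / N) ^ γ) X⁻¹)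
      ≤ X * D * (C₁ * (H * (1 + H * X⁻¹))) * (C₂ * (M * N * (1 + M * N * X⁻¹)) *
          ((1 + Real.log (2 * M)) * (1 + Real.log (2 * N)))) := by
        gcongr
        · exact card_h_le _ _ (by positivity) (by positivity)
        · exact card_mn_le _ _ _ hM hN (by positivity)
    _ ≤ X * D * (C₁ * (H * (1 + H * X⁻¹))) *
          (C₂ * (M * N * (1 + M * N * X⁻¹)) * (4 * L) ^ 2) := by
        gcongr
        exact one_add_log_mul_one_add_log_le hX hH hM hN
    _ = D * C₁ * C₂ * (4 * L) ^ 2 * ((H * X + H ^ 2) * (M * N + (M * N) ^ 2 / X)) := by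
        field_simp
    _ = _ := by
        simp only [mul_pow]
        rw [Real.sq_sqrt (by positivity), Real.sq_sqrt (by positivity)]
        ring

lemma isBilinearBound_monomialKernel_of_le_one (hX : 0 < X) (hX1 : X ≤ 1) (hH : 0 ≤ H)
    (hM : 0 ≤ M) (hN : 0 ≤ N) :
    IsBilinearBound (dyadic H) (dyadic M ×ˢ dyadic N) (monomialKernel α β γ X H M N)
      (8 * √((H * X + H ^ 2) * (M * N + (M * N) ^ 2 / X))) := by
  refine (IsBilinearBound.of_norm_le_one fun h _ p _ => (norm_eR _).le).mono ?_
  rw [card_product, Nat.cast_mul]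
  calc (#(dyadic H) : ℝ) * (#(dyadic M) * #(dyadic N)) ≤ 2 * H * (2 * M * (2 * N)) := by
        gcongr <;> exact card_dyadic_le (by assumption)
    _ = 8 * (H * (M * N)) := by ring
    _ ≤ 8 * √((H * X + H ^ 2) * (M * N + (M * N) ^ 2 / X)) := by
        gcongr
        refine Real.le_sqrt_of_sq_le ?_
        rw [mul_pow]
        gcongr
        · exact le_add_of_nonneg_left (by positivity)
        · exact (le_div_self (by positivity) hX hX1).trans (le_add_of_nonneg_left (by positivity))

theorem exists_isBilinearBound_monomialKernel (hα : α ≠ 0) (hβ : β ≠ 0) (hγ : γ ≠ 0) :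
    ∃ C : ℝ, 0 < C ∧ ∀ X H M N : ℝ, 0 < X → 1 ≤ H → 1 ≤ M → 1 ≤ N →
      IsBilinearBound (dyadic H) (dyadic M ×ˢ dyadic N) (monomialKernel α β γ X H M N)
        (C * Real.log (2 + X * H * M * N) * √((H * X + H ^ 2) * (M * N + (M * N) ^ 2 / X))) := by
  obtain ⟨C, hC, hbound⟩ := exists_isBilinearBound_monomialKernel_of_one_le hα hβ hγ
  refine ⟨C + 16, by positivity, fun X H M N hX hH hM hN => ?_⟩
  have hlog := half_le_log_two_add (x := X * H * M * N) (by positivity)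
  rcases le_total 1 X with hX1 | hX1
  · refine (hbound X H M N hX1 hH hM hN).mono ?_
    gcongr
    linarith
  · refine (isBilinearBound_monomialKernel_of_le_one hX hX1 (by positivity) (by positivity)
      (by positivity)).mono ?_
    gcongr
    nlinarith

lemma sqrt_add_le {x y : ℝ} (hx : 0 ≤ x) (hy : 0 ≤ y) : √(x + y) ≤ √x + √y := by
  simpa only [Real.sqrt_eq_rpow] using
    Real.rpow_add_le_add_rpow hx hy (by norm_num) (by norm_num : (1 : ℝ) / 2 ≤ 1)

lemma sqrt_mul_add_le_four_terms (hX : 0 < X) (hH : 0 ≤ H) (hM : 0 ≤ M) (hN : 0 ≤ N) :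
    √((H * X + H ^ 2) * (M * N + (M * N) ^ 2 / X)) ≤
      X ^ ((1 : ℝ) / 2) * H ^ ((1 : ℝ) / 2) * M ^ ((1 : ℝ) / 2) * N ^ ((1 : ℝ) / 2)
        + H * M ^ ((1 : ℝ) / 2) * N ^ ((1 : ℝ) / 2) + X ^ (-(1 : ℝ) / 2) * H * M * N
        + H ^ ((1 : ℝ) / 2) * M * N := by
  have hXr : X ^ (-(1 : ℝ) / 2) = (√X)⁻¹ := by
    rw [neg_div, Real.rpow_neg hX.le, ← Real.sqrt_eq_rpow]
  simp only [hXr, ← Real.sqrt_eq_rpow]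
  calc √((H * X + H ^ 2) * (M * N + (M * N) ^ 2 / X))
      = √(H * X + H ^ 2) * √(M * N + (M * N) ^ 2 / X) := Real.sqrt_mul (by positivity) _
    _ ≤ (√(H * X) + √(H ^ 2)) * (√(M * N) + √((M * N) ^ 2 / X)) := by
        gcongr <;> exact sqrt_add_le (by positivity) (by positivity)
    _ = (√H * √X + H) * (√M * √N + M * N / √X) := by
        rw [Real.sqrt_mul hH, Real.sqrt_mul hM, Real.sqrt_div (by positivity), Real.sqrt_sq hH,
          Real.sqrt_sq (by positivity)]
    _ = _ := by field_simp; ring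

lemma rpow_half_mul_le_of_le_mul (hM : 0 ≤ M) (hN : 0 ≤ N)
    (hXMN : X ≤ M * N) :
    X ^ ((1 : ℝ) / 2) * H ^ ((1 : ℝ) / 2) * M ^ ((1 : ℝ) / 2) * N ^ ((1 : ℝ) / 2) ≤
      H ^ ((1 : ℝ) / 2) * M * N := by
  simp only [← Real.sqrt_eq_rpow]
  calc √X * √H * √M * √N = √H * (√X * √(M * N)) := by rw [Real.sqrt_mul hM]; ring
    _ ≤ √H * (√(M * N) * √(M * N)) := by gcongr
    _ = √H * M * N := by rw [Real.mul_self_sqrt (by positivity)]; ring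

end Monomial

theorem type_I_bound_small_X_general {α β γ : ℝ} (hα : α ≠ 0) (hβ : β ≠ 0) (hγ : γ ≠ 0) :
    ∃ C : ℝ, 0 < C ∧ ∀ X H M N : ℝ, 0 < X → 1 ≤ H → 1 ≤ M → 1 ≤ N →
      ∀ (a : ℕ → ℂ) (c : ℕ → ℕ → ℂ), (∀ h, ‖a h‖ ≤ 1) → (∀ m n, ‖c m n‖ ≤ 1) →
      ‖∑ h ∈ Ioc ⌊H⌋₊ ⌊2 * H⌋₊, ∑ m ∈ Ioc ⌊M⌋₊ ⌊2 * M⌋₊, ∑ n ∈ Ioc ⌊N⌋₊ ⌊2 * N⌋₊,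
          a h * c m n *
            eR (X * (h : ℝ) ^ α * (m : ℝ) ^ β * (n : ℝ) ^ γ / (H ^ α * M ^ β * N ^ γ))‖ ≤
        C * Real.log (2 + X * H * M * N) *
          (X ^ ((1 : ℝ) / 2) * H ^ ((1 : ℝ) / 2) * M ^ ((1 : ℝ) / 2) * N ^ ((1 : ℝ) / 2)
            + H * M ^ ((1 : ℝ) / 2) * N ^ ((1 : ℝ) / 2)
            + X ^ (-(1 : ℝ) / 2) * H * M * N
            + H ^ ((1 : ℝ) / 2) * M * N) := by
  obtain ⟨C, hC, hbound⟩ := exists_isBilinearBound_monomialKernel hα hβ hγ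
  refine ⟨C, hC, fun X H M N hX hH hM hN a c ha hc => ?_⟩
  have hH0 : 0 ≤ H := by positivity
  have hM0 : 0 ≤ M := by positivity
  have hN0 : 0 ≤ N := by positivity
  have kernel_eq (h m n : ℕ) : monomialKernel α β γ X H M N h (m, n) =
      eR (X * (h : ℝ) ^ α * (m : ℝ) ^ β * (n : ℝ) ^ γ / (H ^ α * M ^ β * N ^ γ)) := by
    rw [monomialKernel, Real.div_rpow (by positivity) hH0, Real.div_rpow (by positivity) hM0,
      Real.div_rpow (by positivity) hN0]
    congr 1
    field_simp
  have bilinear := hbound X H M N hX hH hM hN a (fun p => c p.1 p.2) (fun h _ => ha h)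
    fun p _ => hc p.1 p.2
  simp only [sum_product, kernel_eq, dyadic] at bilinear
  refine bilinear.trans (mul_le_mul_of_nonneg_left (sqrt_mul_add_le_four_terms hX hH0 hM0 hN0) ?_)
  exact mul_nonneg hC.le (by linarith [half_le_log_two_add (x := X * H * M * N) (by positivity)])

/-- Bound for `𝔗` in the range `X ≤ MN`. -/
theorem type_I_bound_small_X
    (α β γ : ℝ) (hαβγ : α * β * γ * (1 - α) ≠ 0) :
    ∃ C : ℝ, 0 < C ∧ ∀ X H M N : ℝ, 0 < X → 1 ≤ H → 1 ≤ M → 1 ≤ N → X ≤ M * N →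
      ∀ a b : ℕ → ℂ, (∀ h, ‖a h‖ ≤ 1) → (∀ m, ‖b m‖ ≤ 1) →
      ‖∑ h ∈ Finset.Ioc ⌊H⌋₊ ⌊2 * H⌋₊, ∑ m ∈ Finset.Ioc ⌊M⌋₊ ⌊2 * M⌋₊,
          ∑ n ∈ Finset.Ioc ⌊N⌋₊ ⌊2 * N⌋₊,
          a h * b m *
            eR (X * (h : ℝ) ^ α * (m : ℝ) ^ β * (n : ℝ) ^ γ /
              (H ^ α * M ^ β * N ^ γ))‖ ≤
        C * Real.log (2 + X * H * M * N) *
          (H * M ^ ((1 : ℝ) / 2) * N ^ ((1 : ℝ) / 2)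
            + X ^ (-(1 : ℝ) / 2) * H * M * N
            + H ^ ((1 : ℝ) / 2) * M * N) := by
  simp only [mul_ne_zero_iff] at hαβγ
  obtain ⟨⟨⟨hα, hβ⟩, hγ⟩, -⟩ := hαβγ
  obtain ⟨C, hC, hbound⟩ := type_I_bound_small_X_general hα hβ hγ
  refine ⟨2 * C, by positivity, fun X H M N hX hH hM hN hXMN a b ha hb => ?_⟩
  have hlog := half_le_log_two_add (x := X * H * M * N) (by positivity)
  have first_le := rpow_half_mul_le_of_le_mul (H := H) (by positivity) (by positivity) hXMN
  have : 0 ≤ H * M ^ ((1 : ℝ) / 2) * N ^ ((1 : ℝ) / 2) := by positivity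
  have : 0 ≤ X ^ (-(1 : ℝ) / 2) * H * M * N := by positivity
  refine (hbound X H M N hX hH hM hN a (fun m _ => b m) ha fun m _ => hb m).trans ?_
  rw [mul_comm 2 C, mul_right_comm C 2, mul_assoc _ (2 : ℝ)]
  exact mul_le_mul_of_nonneg_left (by linarith) (mul_nonneg hC.le (by linarith))
end

section
/- (Vaaler's approximation) There is an absolute constant C such that for every real H ≥ 1 there exist complex numbers a_h (for integers h with 0 < |h| ≤ H) and nonnegative real numbers b_h (for integers h with |h| ≤ H) satisfying |a_h| ≤ C/|h| and b_h ≤ C/H, such that for every real t, the sum Σ_{|h|≤H} b_h e(th) is a nonnegative real number and |ψ(t) − Σ_{0<|h|≤H} a_h e(th)| ≤ Σ_{|h|≤H} b_h e(th). -/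
/-!
For a nonzero real polynomial `P`, the kernel `‖P(e(t))‖²`, scaled to have mean one, is a
nonnegative trigonometric polynomial. Let `S` be the odd sine polynomial with `S' = kernel - 1`.
The error `t - 1/2 + S(t)` is then increasing from `-1/2` at `0` to `0` at `1/2`, and the decay of
the kernel controls how fast it reaches `0`. For the Jackson kernel `P = (1 + ⋯ + X^(M-1))²` the
error is `O((1 + Mt)⁻²)` on `[0, 1/2]`.

The majorant is a multiple of `‖Q(e(t))‖²` for a damped geometric sum `Q = ∑ rᵏXᵏ` of length `n`
with `rⁿ = e⁻¹`: the damping moves the zeros of `Q` off the unit circle, so that `‖Q(e(t))‖` is at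
least of order `n / (1 + nt)` on `[0, 1/2]`. Both `S` and the majorant thus have explicit
coefficients, built from the autocorrelations of those of `P` and of `Q`.
-/

open Finset

/-- The sawtooth function `ψ(t) = t - ⌊t⌋ - 1/2`. -/
noncomputable def sawtooth (t : ℝ) : ℝ := t - ⌊t⌋ - 1 / 2

lemma eR_eq_fourierChar (t : ℝ) : eR t = Real.fourierChar t := by
  rw [Real.fourierChar_apply, eR]
  congr 1
  push_cast
  ring

lemma eR_mul_intCast (t : ℝ) (h : ℤ) : eR (t * h) = eR t ^ h := by
  rw [eR_eq_fourierChar, eR_eq_fourierChar, mul_comm, ← zsmul_eq_mul, AddChar.map_zsmul_eq_zpow,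
    Circle.coe_zpow]

lemma eR_intCast (h : ℤ) : eR h = 1 := by
  rw [eR, Complex.exp_eq_one_iff]
  exact ⟨h, by push_cast; ring⟩

lemma eR_fract (t : ℝ) : eR (Int.fract t) = eR t := by
  rw [Int.fract, eR_eq_fourierChar, AddChar.map_sub_eq_div, Circle.coe_div, ← eR_eq_fourierChar,
    ← eR_eq_fourierChar, eR_intCast, div_one]

lemma eR_one_sub (t : ℝ) : eR (1 - t) = starRingEnd ℂ (eR t) := by
  rw [eR_eq_fourierChar, AddChar.map_sub_eq_div, Circle.coe_div, ← eR_eq_fourierChar,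
    ← Int.cast_one, eR_intCast, one_div, ← Circle.coe_inv, Circle.coe_inv_eq_conj,
    eR_eq_fourierChar]

lemma eR_eq_cos_add_sin_mul_I (t : ℝ) :
    eR t = (Real.cos (2 * Real.pi * t) : ℂ) + (Real.sin (2 * Real.pi * t) : ℂ) * Complex.I := by
  rw [eR_eq_fourierChar, Real.fourierChar_apply, Complex.exp_mul_I, Complex.ofReal_cos,
    Complex.ofReal_sin]

lemma norm_one_sub_eR (t : ℝ) : ‖1 - eR t‖ = 2 * |Real.sin (Real.pi * t)| := by
  rw [norm_sub_rev, eR_eq_fourierChar, Real.fourierChar_apply, mul_comm,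
    Complex.norm_exp_I_mul_ofReal_sub_one, Real.norm_eq_abs, abs_mul, abs_two]
  congr 3
  ring

lemma norm_one_sub_eR_le (t : ℝ) : ‖1 - eR t‖ ≤ 2 * Real.pi * |t| := by
  have h := Real.abs_sin_le_abs (x := Real.pi * t)
  rw [abs_mul, abs_of_pos Real.pi_pos] at h
  rw [norm_one_sub_eR]
  linarith

lemma le_norm_one_sub_eR {t : ℝ} (ht : |t| ≤ 1 / 2) : 4 * |t| ≤ ‖1 - eR t‖ := by
  have hπ := Real.pi_pos
  have habs : |Real.pi * t| = Real.pi * |t| := by rw [abs_mul, abs_of_pos hπ]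
  have h := Real.mul_abs_le_abs_sin (x := Real.pi * t) (by rw [habs]; nlinarith)
  have hlin : 2 / Real.pi * (Real.pi * |t|) = 2 * |t| := by field_simp
  rw [habs, hlin] at h
  rw [norm_one_sub_eR]
  linarith

open Polynomial (aeval)
open scoped Polynomial

/-- The autocorrelation `∑_{i - j = h} pᵢ pⱼ` of the coefficients of `P = ∑ pᵢ Xⁱ`. These are the
Fourier coefficients of `‖P(e(t))‖²`. -/
noncomputable def autocorr (P : ℝ[X]) (h : ℤ) : ℝ :=
  ∑ p ∈ P.support ×ˢ P.support with (p.1 : ℤ) - p.2 = h, P.coeff p.1 * P.coeff p.2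

lemma autocorr_nonneg {P : ℝ[X]} (hP : ∀ i, 0 ≤ P.coeff i) (h : ℤ) : 0 ≤ autocorr P h :=
  sum_nonneg fun p _ => mul_nonneg (hP p.1) (hP p.2)

lemma autocorr_neg (P : ℝ[X]) (h : ℤ) : autocorr P (-h) = autocorr P h :=
  sum_equiv (Equiv.prodComm ℕ ℕ)
    (fun p => by
      simp only [mem_filter, mem_product, Equiv.prodComm_apply, Prod.fst_swap, Prod.snd_swap]
      lia)
    fun p _ => mul_comm _ _

lemma autocorr_zero (P : ℝ[X]) : autocorr P 0 = ∑ i ∈ P.support, P.coeff i ^ 2 := by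
  simp only [autocorr, sum_filter, sum_product, sub_eq_zero, Nat.cast_inj]
  refine sum_congr rfl fun i hi => ?_
  rw [sum_ite_eq, if_pos hi, sq]

lemma autocorr_zero_pos {P : ℝ[X]} (hP : P ≠ 0) : 0 < autocorr P 0 := by
  rw [autocorr_zero]
  exact sum_pos
    (fun i hi => sq_pos_of_ne_zero (Polynomial.mem_support_iff.1 hi))
    (Polynomial.support_nonempty.2 hP)

lemma autocorr_le_autocorr_zero (P : ℝ[X]) (h : ℤ) : autocorr P h ≤ autocorr P 0 := by
  set fiber := {p ∈ P.support ×ˢ P.support | (p.1 : ℤ) - p.2 = h}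
  have hdiff : ∀ p ∈ fiber, (p.1 : ℤ) - p.2 = h := fun p hp => (mem_filter.1 hp).2
  have hmem : ∀ p ∈ fiber, p.1 ∈ P.support ∧ p.2 ∈ P.support := fun p hp =>
    mem_product.1 (mem_filter.1 hp).1
  have sum_comp_le {g : ℕ × ℕ → ℕ} (hg : Set.InjOn g fiber)
      (hsupp : ∀ p ∈ fiber, g p ∈ P.support) :
      ∑ p ∈ fiber, P.coeff (g p) ^ 2 ≤ autocorr P 0 := by
    rw [autocorr_zero, ← sum_image (f := fun i => P.coeff i ^ 2) hg]
    exact sum_le_sum_of_subset_of_nonneg (image_subset_iff.2 hsupp) fun i _ _ => sq_nonneg _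
  have hfst : ∑ p ∈ fiber, P.coeff p.1 ^ 2 ≤ autocorr P 0 := by
    refine sum_comp_le (fun p hp q hq hpq => Prod.ext hpq ?_) fun p hp => (hmem p hp).1
    have hp := hdiff p hp
    have hq := hdiff q hq
    lia
  have hsnd : ∑ p ∈ fiber, P.coeff p.2 ^ 2 ≤ autocorr P 0 := by
    refine sum_comp_le (fun p hp q hq hpq => Prod.ext ?_ hpq) fun p hp => (hmem p hp).2
    have hp := hdiff p hp
    have hq := hdiff q hq
    lia
  have hamgm : 2 * autocorr P h ≤ ∑ p ∈ fiber, (P.coeff p.1 ^ 2 + P.coeff p.2 ^ 2) := by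
    rw [autocorr, mul_sum]
    exact sum_le_sum fun p _ => by linarith [two_mul_le_add_sq (P.coeff p.1) (P.coeff p.2)]
  rw [sum_add_distrib] at hamgm
  linarith

lemma eval_one_sq_le (P : ℝ[X]) : P.eval 1 ^ 2 ≤ (P.natDegree + 1) * autocorr P 0 := by
  have heval : P.eval 1 = ∑ i ∈ P.support, P.coeff i := by
    simp only [Polynomial.eval_eq_sum, Polynomial.sum_def, one_pow, mul_one]
  calc P.eval 1 ^ 2 ≤ #P.support * autocorr P 0 := by
        rw [heval, autocorr_zero]
        exact sq_sum_le_card_mul_sum_sq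
    _ ≤ (P.natDegree + 1) * autocorr P 0 := by
        rw [autocorr_zero]
        gcongr
        exact_mod_cast Polynomial.card_supp_le_succ_natDegree P

lemma autocorr_zero_le {P : ℝ[X]} (hP : ∀ i, |P.coeff i| ≤ 1) :
    autocorr P 0 ≤ P.natDegree + 1 := by
  calc autocorr P 0 ≤ ∑ _i ∈ P.support, (1 : ℝ) := by
        rw [autocorr_zero]
        exact sum_le_sum fun i _ => (sq_le_one_iff_abs_le_one _).2 (hP i)
    _ ≤ P.natDegree + 1 := by
        rw [sum_const, nsmul_one]
        exact_mod_cast Polynomial.card_supp_le_succ_natDegree P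

lemma sum_autocorr_mul_zpow {P : ℝ[X]} {N : ℕ} (hP : P.natDegree ≤ N) {z : ℂ} (hz : ‖z‖ = 1) :
    ∑ h ∈ Icc (-(N : ℤ)) N, (autocorr P h : ℂ) * z ^ h =
      (‖aeval z P‖ ^ 2 : ℝ) := by
  have hz0 : z ≠ 0 := norm_ne_zero_iff.1 (hz ▸ one_ne_zero)
  have hmaps : ∀ p ∈ P.support ×ˢ P.support, (p.1 : ℤ) - p.2 ∈ Icc (-(N : ℤ)) N := fun p hp => by
    have h₁ := Polynomial.le_natDegree_of_mem_supp _ (mem_product.1 hp).1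
    have h₂ := Polynomial.le_natDegree_of_mem_supp _ (mem_product.1 hp).2
    rw [mem_Icc]
    lia
  have haeval : aeval z P = ∑ i ∈ P.support, (P.coeff i : ℂ) * z ^ i := by
    rw [Polynomial.aeval_def, Polynomial.eval₂_eq_sum, Polynomial.sum_def]
    rfl
  calc ∑ h ∈ Icc (-(N : ℤ)) N, (autocorr P h : ℂ) * z ^ h
      = ∑ h ∈ Icc (-(N : ℤ)) N, ∑ p ∈ P.support ×ˢ P.support with (p.1 : ℤ) - p.2 = h,
          (P.coeff p.1 * P.coeff p.2 : ℂ) * z ^ ((p.1 : ℤ) - p.2) := by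
        refine sum_congr rfl fun h _ => ?_
        rw [autocorr, Complex.ofReal_sum, sum_mul]
        refine sum_congr rfl fun p hp => ?_
        rw [(mem_filter.1 hp).2, Complex.ofReal_mul]
    _ = ∑ p ∈ P.support ×ˢ P.support,
          (P.coeff p.1 * P.coeff p.2 : ℂ) * z ^ ((p.1 : ℤ) - p.2) :=
        sum_fiberwise_of_maps_to hmaps _
    _ = aeval z P * starRingEnd ℂ (aeval z P) := by
        rw [haeval, map_sum, sum_mul_sum, sum_product]
        refine sum_congr rfl fun i _ => sum_congr rfl fun j _ => ?_
        rw [map_mul, map_pow, Complex.conj_ofReal, ← Complex.inv_eq_conj hz, zpow_sub₀ hz0,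
          zpow_natCast, zpow_natCast, inv_pow]
        ring
    _ = (‖aeval z P‖ ^ 2 : ℝ) := by
        rw [Complex.mul_conj', Complex.ofReal_pow]

lemma sum_autocorr_mul_cos {P : ℝ[X]} {N : ℕ} (hP : P.natDegree ≤ N) (t : ℝ) :
    ∑ h ∈ Icc (-(N : ℤ)) N, autocorr P h * Real.cos (2 * Real.pi * (t * h)) =
      ‖aeval (eR t) P‖ ^ 2 := by
  have hre := congrArg Complex.re (sum_autocorr_mul_zpow hP (norm_eR t))
  rw [Complex.re_sum, Complex.ofReal_re] at hre
  rw [← hre]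
  refine sum_congr rfl fun h _ => ?_
  rw [← eR_mul_intCast, eR_eq_cos_add_sin_mul_I, Complex.re_ofReal_mul, Complex.add_re,
    Complex.re_ofReal_mul, Complex.I_re, mul_zero, add_zero, Complex.ofReal_re]

lemma norm_aeval_eR_one_sub (P : ℝ[X]) (t : ℝ) :
    ‖aeval (eR (1 - t)) P‖ = ‖aeval (eR t) P‖ := by
  rw [eR_one_sub, Polynomial.aeval_conj, RCLike.norm_conj]

section SineSum

/-- The sine polynomial `∑_{h ∈ s} c(h) / (2πh) * sin(2πht)`, the primitive of
`∑_{h ∈ s} c(h) * cos(2πht)` vanishing at `0` when `0 ∉ s`. -/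
noncomputable def sineSum (s : Finset ℤ) (c : ℤ → ℝ) (t : ℝ) : ℝ :=
  ∑ h ∈ s, c h / (2 * Real.pi * h) * Real.sin (2 * Real.pi * (t * h))

variable {s : Finset ℤ}

lemma hasDerivAt_sineSum (hs : 0 ∉ s) (c : ℤ → ℝ) (t : ℝ) :
    HasDerivAt (sineSum s c) (∑ h ∈ s, c h * Real.cos (2 * Real.pi * (t * h))) t := by
  refine HasDerivAt.fun_sum fun h hh => ?_
  have hh0 : (h : ℝ) ≠ 0 := Int.cast_ne_zero.2 (ne_of_mem_of_not_mem hh hs)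
  have hphase : HasDerivAt (fun t : ℝ => 2 * Real.pi * (t * h)) (2 * Real.pi * (1 * h)) t :=
    ((hasDerivAt_id t).mul_const (h : ℝ)).const_mul _
  refine (hphase.sin.const_mul (c h / (2 * Real.pi * h))).congr_deriv ?_
  field_simp

lemma sineSum_zero (s : Finset ℤ) (c : ℤ → ℝ) : sineSum s c 0 = 0 := by
  simp [sineSum]

lemma sineSum_one_sub (s : Finset ℤ) (c : ℤ → ℝ) (t : ℝ) :
    sineSum s c (1 - t) = -sineSum s c t := by
  rw [sineSum, sineSum, ← sum_neg_distrib]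
  refine sum_congr rfl fun h _ => ?_
  have hphase : 2 * Real.pi * ((1 - t) * h) = h * (2 * Real.pi) - 2 * Real.pi * (t * h) := by ring
  rw [hphase, Real.sin_int_mul_two_pi_sub, mul_neg]

lemma sum_div_mul_I_mul_eR (hs : ∀ h ∈ s, -h ∈ s) {c : ℤ → ℝ} (hc : ∀ h, c (-h) = c h) (t : ℝ) :
    ∑ h ∈ s, ((c h / (2 * Real.pi * h) : ℝ) * Complex.I) * eR (t * h) = -(sineSum s c t : ℂ) := by
  have hcos : ∑ h ∈ s, c h / (2 * Real.pi * h) * Real.cos (2 * Real.pi * (t * h)) = 0 := by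
    refine sum_involution (fun h _ => -h) (fun h _ => ?_) (fun h _ hne heq => hne ?_) hs
      fun h _ => neg_neg h
    · simp [hc, div_neg]
    · simp [self_eq_neg.1 heq.symm]
  have hterm (h : ℤ) : ((c h / (2 * Real.pi * h) : ℝ) * Complex.I) * eR (t * h) =
      (c h / (2 * Real.pi * h) * Real.cos (2 * Real.pi * (t * h)) : ℝ) * Complex.I -
        (c h / (2 * Real.pi * h) * Real.sin (2 * Real.pi * (t * h)) : ℝ) := by
    rw [eR_eq_cos_add_sin_mul_I, Complex.ofReal_mul, Complex.ofReal_mul]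
    linear_combination ((c h / (2 * Real.pi * h) : ℝ) : ℂ) *
      (Real.sin (2 * Real.pi * (t * h)) : ℂ) * Complex.I_sq
  simp only [hterm]
  rw [sum_sub_distrib, ← sum_mul, ← Complex.ofReal_sum, hcos, ← Complex.ofReal_sum,
    Complex.ofReal_zero, zero_mul, zero_sub, sineSum]

end SineSum

lemma sub_le_div_pow_of_hasDerivAt_le {f f' : ℝ → ℝ} {a b κ : ℝ} (n : ℕ) (ha : 0 < a)
    (hab : a ≤ b) (hκ : 0 ≤ κ) (hf : ∀ u ∈ Set.Icc a b, HasDerivAt f (f' u) u)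
    (hf' : ∀ u ∈ Set.Icc a b, f' u ≤ n * κ / u ^ (n + 1)) :
    f b - f a ≤ κ / a ^ n := by
  have hderiv : ∀ u ∈ Set.Icc a b,
      HasDerivAt (fun u => f u + κ * (u ^ n)⁻¹) (f' u - n * κ / u ^ (n + 1)) u := fun u hu => by
    have hu0 : u ≠ 0 := (ha.trans_le hu.1).ne'
    have hpow := (hasDerivAt_zpow (-n : ℤ) u (Or.inl hu0)).const_mul κ
    simp only [zpow_neg, zpow_natCast] at hpow
    refine ((hf u hu).add hpow).congr_deriv ?_
    rw [← neg_add', zpow_neg, ← Nat.cast_succ, zpow_natCast, Nat.succ_eq_add_one, Int.cast_neg,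
      Int.cast_natCast]
    ring
  have hanti : AntitoneOn (fun u => f u + κ * (u ^ n)⁻¹) (Set.Icc a b) :=
    antitoneOn_of_hasDerivWithinAt_nonpos (convex_Icc a b)
      (fun u hu => (hderiv u hu).continuousAt.continuousWithinAt)
      (fun u hu => (hderiv u (interior_subset hu)).hasDerivWithinAt)
      fun u hu => sub_nonpos.2 (hf' u (interior_subset hu))
  have hends := hanti (Set.left_mem_Icc.2 hab) (Set.right_mem_Icc.2 hab) hab
  have hb : 0 ≤ κ * (b ^ n)⁻¹ := by
    have := ha.trans_le hab
    positivity
  rw [div_eq_mul_inv]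
  linarith

section SawtoothError

/-- The Fourier coefficients of `‖P(e(t))‖²` after scaling to mean one; meaningful for `P ≠ 0`. -/
noncomputable def normalizedAutocorr (P : ℝ[X]) (h : ℤ) : ℝ := autocorr P h / autocorr P 0

lemma normalizedAutocorr_neg (P : ℝ[X]) (h : ℤ) :
    normalizedAutocorr P (-h) = normalizedAutocorr P h := by
  rw [normalizedAutocorr, autocorr_neg, normalizedAutocorr]

lemma abs_normalizedAutocorr_le_one {P : ℝ[X]} (hP : ∀ i, 0 ≤ P.coeff i) (h : ℤ) :
    |normalizedAutocorr P h| ≤ 1 := by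
  rw [normalizedAutocorr, abs_of_nonneg (div_nonneg (autocorr_nonneg hP h) (autocorr_nonneg hP 0))]
  exact div_le_one_of_le₀ (autocorr_le_autocorr_zero P h) (autocorr_nonneg hP 0)

/-- On `[0, 1)`, the difference between the sawtooth and its approximation by the sine polynomial
of degree `N` attached to the kernel `‖P(e(t))‖²`. It is considered on `[0, 1]`, where it is odd
about `1/2`. -/
noncomputable def sawtoothError (P : ℝ[X]) (N : ℕ) (t : ℝ) : ℝ :=
  t - 1 / 2 + sineSum ((Icc (-(N : ℤ)) N).erase 0) (normalizedAutocorr P) t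

variable {P : ℝ[X]} {N : ℕ}

lemma sawtoothError_zero (P : ℝ[X]) (N : ℕ) : sawtoothError P N 0 = -(1 / 2) := by
  rw [sawtoothError, sineSum_zero, zero_sub, add_zero]

lemma sawtoothError_one_sub (P : ℝ[X]) (N : ℕ) (t : ℝ) :
    sawtoothError P N (1 - t) = -sawtoothError P N t := by
  rw [sawtoothError, sineSum_one_sub, sawtoothError]
  ring

lemma sawtoothError_half (P : ℝ[X]) (N : ℕ) : sawtoothError P N (1 / 2) = 0 := by
  have h := sawtoothError_one_sub P N (1 / 2)
  rwa [sub_half, self_eq_neg] at h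

lemma hasDerivAt_sawtoothError (hP : P ≠ 0) (hN : P.natDegree ≤ N) (t : ℝ) :
    HasDerivAt (sawtoothError P N) (‖aeval (eR t) P‖ ^ 2 / autocorr P 0) t := by
  have hkernel : 1 + ∑ h ∈ (Icc (-(N : ℤ)) N).erase 0,
      normalizedAutocorr P h * Real.cos (2 * Real.pi * (t * h)) =
        ‖aeval (eR t) P‖ ^ 2 / autocorr P 0 := by
    have hzero : 1 = normalizedAutocorr P 0 * Real.cos (2 * Real.pi * (t * (0 : ℤ))) := by
      simp [normalizedAutocorr, (autocorr_zero_pos hP).ne']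
    rw [hzero, add_sum_erase _ (fun h : ℤ => _ * Real.cos (2 * Real.pi * (t * h)))
      (mem_Icc.2 ⟨by lia, by lia⟩), ← sum_autocorr_mul_cos hN, sum_div]
    exact sum_congr rfl fun h _ => div_mul_eq_mul_div _ _ _
  rw [← hkernel]
  exact ((hasDerivAt_id t).sub_const _).add (hasDerivAt_sineSum (notMem_erase _ _) _ t)

lemma monotone_sawtoothError (hP : P ≠ 0) (hN : P.natDegree ≤ N) :
    Monotone (sawtoothError P N) :=
  monotone_of_hasDerivAt_nonneg (hasDerivAt_sawtoothError hP hN) fun _ =>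
    div_nonneg (sq_nonneg _) (autocorr_zero_pos hP).le

lemma abs_sawtoothError (hP : P ≠ 0) (hN : P.natDegree ≤ N) {t : ℝ} (ht : t ≤ 1 / 2) :
    |sawtoothError P N t| = sawtoothError P N (1 / 2) - sawtoothError P N t := by
  rw [abs_of_nonpos ((monotone_sawtoothError hP hN ht).trans_eq (sawtoothError_half P N)),
    sawtoothError_half, zero_sub]

lemma abs_sawtoothError_le_half (hP : P ≠ 0) (hN : P.natDegree ≤ N) {t : ℝ} (ht₀ : 0 ≤ t)
    (ht : t ≤ 1 / 2) : |sawtoothError P N t| ≤ 1 / 2 := by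
  have hmono := monotone_sawtoothError hP hN ht₀
  rw [sawtoothError_zero] at hmono
  rw [abs_sawtoothError hP hN ht, sawtoothError_half]
  linarith

end SawtoothError

lemma norm_geom_sum_mul_norm_one_sub_le {z : ℂ} (hz : ‖z‖ ≤ 1) (n : ℕ) :
    ‖∑ i ∈ range n, z ^ i‖ * ‖1 - z‖ ≤ 2 := by
  calc ‖∑ i ∈ range n, z ^ i‖ * ‖1 - z‖ = ‖1 - z ^ n‖ := by rw [← norm_mul, geom_sum_mul_neg]
    _ ≤ ‖(1 : ℂ)‖ + ‖z ^ n‖ := norm_sub_le _ _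
    _ ≤ 1 + 1 := by
        rw [norm_one, norm_pow]
        gcongr
        exact pow_le_one₀ (norm_nonneg z) hz
    _ = 2 := one_add_one_eq_two

section Jackson

/-- The polynomial `(1 + X + ⋯ + X ^ (M - 1))²`, for which `‖P(e(t))‖²` is the (unnormalized)
Jackson kernel. -/
noncomputable def jacksonPoly (M : ℕ) : ℝ[X] := (∑ i ∈ range M, Polynomial.X ^ i) ^ 2

lemma aeval_jacksonPoly (M : ℕ) (z : ℂ) :
    aeval z (jacksonPoly M) = (∑ i ∈ range M, z ^ i) ^ 2 := by
  simp only [jacksonPoly, map_pow, map_sum, Polynomial.aeval_X]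

lemma eval_one_jacksonPoly (M : ℕ) : (jacksonPoly M).eval 1 = (M : ℝ) ^ 2 := by
  simp [jacksonPoly, Polynomial.eval_finsetSum]

lemma jacksonPoly_ne_zero {M : ℕ} (hM : M ≠ 0) : jacksonPoly M ≠ 0 := fun h => by
  have heval := eval_one_jacksonPoly M
  rw [h, Polynomial.eval_zero] at heval
  exact pow_ne_zero 2 (Nat.cast_ne_zero.2 hM) heval.symm

lemma coeff_jacksonPoly_nonneg (M k : ℕ) : 0 ≤ (jacksonPoly M).coeff k := by
  have hgeom (i : ℕ) : 0 ≤ (∑ j ∈ range M, Polynomial.X ^ j : ℝ[X]).coeff i := by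
    rw [Polynomial.finsetSum_coeff]
    exact sum_nonneg fun j _ => by rw [Polynomial.coeff_X_pow]; positivity
  rw [jacksonPoly, sq, Polynomial.coeff_mul]
  exact sum_nonneg fun p _ => mul_nonneg (hgeom p.1) (hgeom p.2)

lemma natDegree_jacksonPoly_le (M : ℕ) : (jacksonPoly M).natDegree ≤ 2 * (M - 1) :=
  Polynomial.natDegree_pow_le_of_le 2 <| Polynomial.natDegree_sum_le_of_forall_le _ _ fun i hi => by
    rw [Polynomial.natDegree_X_pow]
    exact Nat.le_sub_one_of_lt (mem_range.1 hi)

lemma le_autocorr_jacksonPoly_zero {M : ℕ} (hM : M ≠ 0) :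
    (M : ℝ) ^ 3 / 2 ≤ autocorr (jacksonPoly M) 0 := by
  have hM0 : (0 : ℝ) < M := by positivity
  have hdeg : ((jacksonPoly M).natDegree : ℝ) + 1 ≤ 2 * M := by
    have := natDegree_jacksonPoly_le M
    exact_mod_cast (by lia : (jacksonPoly M).natDegree + 1 ≤ 2 * M)
  have hpos := autocorr_zero_pos (jacksonPoly_ne_zero hM)
  have hle : (M : ℝ) * M ^ 3 ≤ M * (2 * autocorr (jacksonPoly M) 0) :=
    calc (M : ℝ) * M ^ 3 = (jacksonPoly M).eval 1 ^ 2 := by rw [eval_one_jacksonPoly]; ring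
      _ ≤ ((jacksonPoly M).natDegree + 1) * autocorr (jacksonPoly M) 0 := eval_one_sq_le _
      _ ≤ 2 * M * autocorr (jacksonPoly M) 0 := by gcongr
      _ = M * (2 * autocorr (jacksonPoly M) 0) := by ring
  linarith [le_of_mul_le_mul_left hle hM0]

lemma norm_aeval_eR_jacksonPoly_sq_le (M : ℕ) {t : ℝ} (ht₀ : t ≠ 0) (ht : |t| ≤ 1 / 2) :
    ‖aeval (eR t) (jacksonPoly M)‖ ^ 2 ≤ 1 / (16 * t ^ 4) := by
  have hgeom : ‖∑ i ∈ range M, eR t ^ i‖ ≤ 1 / (2 * |t|) := by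
    rw [le_div_iff₀ (by positivity)]
    have hlower := mul_le_mul_of_nonneg_left (le_norm_one_sub_eR ht)
      (norm_nonneg (∑ i ∈ range M, eR t ^ i))
    linarith [norm_geom_sum_mul_norm_one_sub_le (norm_eR t).le M]
  calc ‖aeval (eR t) (jacksonPoly M)‖ ^ 2
      = ‖∑ i ∈ range M, eR t ^ i‖ ^ 4 := by rw [aeval_jacksonPoly, norm_pow, ← pow_mul]
    _ ≤ (1 / (2 * |t|)) ^ 4 := by gcongr
    _ = 1 / (16 * t ^ 4) := by
        rw [div_pow, mul_pow, Even.pow_abs (by decide)]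
        norm_num

variable {M N : ℕ}

lemma abs_sawtoothError_jacksonPoly_le_div_pow (hM : M ≠ 0) (hN : 2 * (M - 1) ≤ N) {t : ℝ}
    (ht₀ : 0 < t) (ht : t ≤ 1 / 2) :
    |sawtoothError (jacksonPoly M) N t| ≤ 1 / (24 * (M * t) ^ 3) := by
  have hP := jacksonPoly_ne_zero hM
  have hdeg := (natDegree_jacksonPoly_le M).trans hN
  have hdecay : ∀ u ∈ Set.Icc t (1 / 2),
      ‖aeval (eR u) (jacksonPoly M)‖ ^ 2 / autocorr (jacksonPoly M) 0 ≤
        (3 : ℕ) * (1 / (24 * (M : ℝ) ^ 3)) / u ^ (3 + 1) := fun u hu => by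
    have hu0 : 0 < u := ht₀.trans_le hu.1
    calc ‖aeval (eR u) (jacksonPoly M)‖ ^ 2 / autocorr (jacksonPoly M) 0
        ≤ 1 / (16 * u ^ 4) / ((M : ℝ) ^ 3 / 2) := by
          gcongr
          · exact norm_aeval_eR_jacksonPoly_sq_le M hu0.ne' ((abs_of_pos hu0).trans_le hu.2)
          · exact le_autocorr_jacksonPoly_zero hM
      _ = (3 : ℕ) * (1 / (24 * (M : ℝ) ^ 3)) / u ^ (3 + 1) := by
          field_simp
          ring
  calc |sawtoothError (jacksonPoly M) N t|
      = sawtoothError (jacksonPoly M) N (1 / 2) - sawtoothError (jacksonPoly M) N t :=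
        abs_sawtoothError hP hdeg ht
    _ ≤ 1 / (24 * (M : ℝ) ^ 3) / t ^ 3 :=
        sub_le_div_pow_of_hasDerivAt_le 3 ht₀ ht (by positivity)
          (fun u _ => hasDerivAt_sawtoothError hP hdeg u) hdecay
    _ = 1 / (24 * (M * t) ^ 3) := by rw [div_div, mul_pow, mul_assoc]

lemma abs_sawtoothError_jacksonPoly_le (hM : M ≠ 0) (hN : 2 * (M - 1) ≤ N) {t : ℝ}
    (ht₀ : 0 ≤ t) (ht : t ≤ 1 / 2) :
    |sawtoothError (jacksonPoly M) N t| ≤ 2 / (1 + M * t) ^ 2 := by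
  rcases le_total (M * t) 1 with hsmall | hlarge
  · calc |sawtoothError (jacksonPoly M) N t| ≤ 1 / 2 :=
          abs_sawtoothError_le_half (jacksonPoly_ne_zero hM)
            ((natDegree_jacksonPoly_le M).trans hN) ht₀ ht
      _ = 2 / (1 + 1) ^ 2 := by norm_num
      _ ≤ 2 / (1 + M * t) ^ 2 := by gcongr
  · have htpos : 0 < t := pos_of_mul_pos_right (one_pos.trans_le hlarge) (Nat.cast_nonneg M)
    calc |sawtoothError (jacksonPoly M) N t| ≤ 1 / (24 * (M * t) ^ 3) :=
          abs_sawtoothError_jacksonPoly_le_div_pow hM hN htpos ht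
      _ ≤ 2 / (1 + M * t) ^ 2 := by
          rw [div_le_div_iff₀ (by positivity) (by positivity)]
          have hpow : (M * t) ^ 2 ≤ (M * t) ^ 3 := pow_le_pow_right₀ hlarge (by norm_num)
          nlinarith

end Jackson

/-- The damped geometric sum `∑_{k < n} (rX)ᵏ` with `r = exp(-1/n)`. -/
noncomputable def dampedGeomPoly (n : ℕ) : ℝ[X] :=
  ∑ k ∈ range n, Polynomial.C (Real.exp (-(1 / n)) ^ k) * Polynomial.X ^ k

lemma coeff_dampedGeomPoly (n k : ℕ) :
    (dampedGeomPoly n).coeff k = if k < n then Real.exp (-(1 / n)) ^ k else 0 := by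
  simp only [dampedGeomPoly, Polynomial.finsetSum_coeff, Polynomial.coeff_C_mul_X_pow, sum_ite_eq,
    mem_range]

lemma coeff_dampedGeomPoly_nonneg (n k : ℕ) : 0 ≤ (dampedGeomPoly n).coeff k := by
  rw [coeff_dampedGeomPoly]
  positivity

lemma abs_coeff_dampedGeomPoly_le_one (n k : ℕ) : |(dampedGeomPoly n).coeff k| ≤ 1 := by
  rw [abs_of_nonneg (coeff_dampedGeomPoly_nonneg n k), coeff_dampedGeomPoly]
  split_ifs
  · exact pow_le_one₀ (Real.exp_nonneg _) (Real.exp_le_one_iff.2 (by simp))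
  · exact zero_le_one

lemma natDegree_dampedGeomPoly_le (n : ℕ) : (dampedGeomPoly n).natDegree ≤ n - 1 :=
  Polynomial.natDegree_le_iff_coeff_eq_zero.2 fun k hk => by
    rw [coeff_dampedGeomPoly, if_neg (by lia)]

lemma norm_one_sub_ofReal_mul_le {r : ℝ} (hr₀ : 0 ≤ r) (hr₁ : r ≤ 1) (z : ℂ) :
    ‖1 - r * z‖ ≤ (1 - r) + r * ‖1 - z‖ := by
  have hsplit : 1 - r * z = ((1 - r : ℝ) : ℂ) + r * (1 - z) := by
    push_cast
    ring
  rw [hsplit]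
  refine (norm_add_le _ _).trans_eq ?_
  rw [norm_mul, Complex.norm_of_nonneg hr₀, Complex.norm_of_nonneg (sub_nonneg.2 hr₁)]

lemma div_two_le_norm_aeval_dampedGeomPoly_mul (n : ℕ) {z : ℂ} (hz : ‖z‖ ≤ 1) :
    (n : ℝ) / 2 ≤ ‖aeval z (dampedGeomPoly n)‖ * (1 + n * ‖1 - z‖) := by
  rcases eq_or_ne n 0 with rfl | hn
  · simp [dampedGeomPoly]
  set r := Real.exp (-(1 / n)) with hr
  have hr₀ : 0 ≤ r := Real.exp_nonneg _
  have hr₁ : r ≤ 1 := Real.exp_le_one_iff.2 (by simp)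
  have hrn : r ^ n ≤ 1 / 2 := by
    rw [hr, ← Real.exp_nat_mul, mul_neg, mul_one_div_cancel (Nat.cast_ne_zero.2 hn)]
    exact Real.exp_neg_one_lt_half.le
  have haeval : aeval z (dampedGeomPoly n) = ∑ k ∈ range n, (r * z) ^ k := by
    simp only [dampedGeomPoly, map_sum, map_mul, map_pow, mul_pow, Polynomial.aeval_C,
      Polynomial.aeval_X, Complex.coe_algebraMap, hr]
  have hnum : 1 / 2 ≤ ‖1 - (r * z : ℂ) ^ n‖ := by
    have hpow : ‖(r * z : ℂ) ^ n‖ ≤ 1 / 2 := by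
      rw [norm_pow, norm_mul, Complex.norm_of_nonneg hr₀]
      exact (pow_le_pow_left₀ (by positivity) (mul_le_of_le_one_right hr₀ hz) n).trans hrn
    have htri := norm_sub_norm_le (1 : ℂ) ((r * z) ^ n)
    rw [norm_one] at htri
    linarith
  have hden : n * ‖1 - (r * z : ℂ)‖ ≤ 1 + n * ‖1 - z‖ :=
    calc n * ‖1 - (r * z : ℂ)‖ ≤ n * ((1 - r) + r * ‖1 - z‖) := by
          gcongr
          exact norm_one_sub_ofReal_mul_le hr₀ hr₁ z
      _ ≤ n * (1 / n + 1 * ‖1 - z‖) := by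
          gcongr
          linarith [Real.one_sub_le_exp_neg (1 / n)]
      _ = 1 + n * ‖1 - z‖ := by field_simp
  calc (n : ℝ) / 2 = n * (1 / 2) := by ring
    _ ≤ n * ‖1 - (r * z : ℂ) ^ n‖ := by gcongr
    _ = ‖aeval z (dampedGeomPoly n)‖ * (n * ‖1 - (r * z : ℂ)‖) := by
        rw [haeval, ← geom_sum_mul_neg, norm_mul]
        ring
    _ ≤ ‖aeval z (dampedGeomPoly n)‖ * (1 + n * ‖1 - z‖) := by gcongr

lemma div_le_norm_aeval_eR_dampedGeomPoly (n : ℕ) (t : ℝ) :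
    n / (1 + n * |t|) ≤ 13 * ‖aeval (eR t) (dampedGeomPoly n)‖ := by
  set q := ‖aeval (eR t) (dampedGeomPoly n)‖
  have hden : 1 + n * ‖1 - eR t‖ ≤ 13 / 2 * (1 + n * |t|) :=
    calc 1 + n * ‖1 - eR t‖ ≤ 13 / 2 + n * (13 / 2 * |t|) := by
          gcongr
          · norm_num
          · refine (norm_one_sub_eR_le t).trans ?_
            gcongr
            linarith [Real.pi_lt_d2]
      _ = 13 / 2 * (1 + n * |t|) := by ring
  rw [div_le_iff₀ (by positivity)]
  have hq : (n : ℝ) / 2 ≤ q * (13 / 2 * (1 + n * |t|)) :=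
    (div_two_le_norm_aeval_dampedGeomPoly_mul n (norm_eR t).le).trans (by gcongr)
  linarith

lemma abs_sawtoothError_jacksonPoly_le_dampedGeomPoly {M N n : ℕ} (hN : 2 * (M - 1) ≤ N)
    (hn : n ≠ 0) (hnM : n ≤ 2 * M) {t : ℝ} (ht₀ : 0 ≤ t) (ht : t ≤ 1) :
    |sawtoothError (jacksonPoly M) N t| ≤
      1352 / (n : ℝ) ^ 2 * ‖aeval (eR t) (dampedGeomPoly n)‖ ^ 2 := by
  wlog hhalf : t ≤ 1 / 2 generalizing t
  · have hreflect := this (t := 1 - t) (by linarith) (by linarith) (by linarith)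
    rwa [sawtoothError_one_sub, abs_neg, norm_aeval_eR_one_sub] at hreflect
  have hnM' : (n : ℝ) ≤ 2 * M := by exact_mod_cast hnM
  have hden : (1 + n * t) / 2 ≤ 1 + M * t := by nlinarith
  have hdamped := div_le_norm_aeval_eR_dampedGeomPoly n t
  rw [abs_of_nonneg ht₀] at hdamped
  calc |sawtoothError (jacksonPoly M) N t| ≤ 2 / (1 + M * t) ^ 2 :=
        abs_sawtoothError_jacksonPoly_le (by lia) hN ht₀ hhalf
    _ ≤ 2 / ((1 + n * t) / 2) ^ 2 := by gcongr
    _ = 8 / (n : ℝ) ^ 2 * (n / (1 + n * t)) ^ 2 := by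
        field_simp
        norm_num
    _ ≤ 8 / (n : ℝ) ^ 2 * (13 * ‖aeval (eR t) (dampedGeomPoly n)‖) ^ 2 := by gcongr
    _ = 1352 / (n : ℝ) ^ 2 * ‖aeval (eR t) (dampedGeomPoly n)‖ ^ 2 := by ring

/-- Coefficients of the approximating polynomial of degree `N`. The parameter `N / 2 + 1` is the
largest `M` for which `jacksonPoly M` has degree at most `N`. The junk value at `h = 0` is `0`. -/
noncomputable def sawtoothCoeff (N : ℕ) (h : ℤ) : ℂ :=
  (normalizedAutocorr (jacksonPoly (N / 2 + 1)) h / (2 * Real.pi * h) : ℝ) * Complex.I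

/-- Coefficients of the majorant of degree `N`. The constant is the one of
`abs_sawtoothError_jacksonPoly_le_dampedGeomPoly`. -/
noncomputable def majorantCoeff (N : ℕ) (h : ℤ) : ℝ :=
  1352 / ((N + 1 : ℕ) : ℝ) ^ 2 * autocorr (dampedGeomPoly (N + 1)) h

lemma norm_sawtoothCoeff_le (N : ℕ) (h : ℤ) : ‖sawtoothCoeff N h‖ ≤ 1 / |(h : ℝ)| := by
  rw [sawtoothCoeff, norm_mul, Complex.norm_I, mul_one, Complex.norm_real, Real.norm_eq_abs,
    abs_div, abs_mul, abs_of_pos Real.two_pi_pos, ← div_div]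
  gcongr
  rw [div_le_iff₀ Real.two_pi_pos]
  linarith [abs_normalizedAutocorr_le_one (coeff_jacksonPoly_nonneg (N / 2 + 1)) h,
    Real.pi_gt_three]

lemma majorantCoeff_nonneg (N : ℕ) (h : ℤ) : 0 ≤ majorantCoeff N h :=
  mul_nonneg (by positivity) (autocorr_nonneg (coeff_dampedGeomPoly_nonneg _) h)

lemma majorantCoeff_le (N : ℕ) (h : ℤ) : majorantCoeff N h ≤ 1352 / ((N + 1 : ℕ) : ℝ) := by
  have hdeg : ((dampedGeomPoly (N + 1)).natDegree : ℝ) + 1 ≤ (N + 1 : ℕ) := by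
    exact_mod_cast Nat.succ_le_succ (natDegree_dampedGeomPoly_le (N + 1))
  have hautocorr : autocorr (dampedGeomPoly (N + 1)) h ≤ (N + 1 : ℕ) :=
    calc autocorr (dampedGeomPoly (N + 1)) h ≤ autocorr (dampedGeomPoly (N + 1)) 0 :=
          autocorr_le_autocorr_zero _ h
      _ ≤ (dampedGeomPoly (N + 1)).natDegree + 1 :=
          autocorr_zero_le (abs_coeff_dampedGeomPoly_le_one _)
      _ ≤ (N + 1 : ℕ) := hdeg
  calc majorantCoeff N h ≤ 1352 / ((N + 1 : ℕ) : ℝ) ^ 2 * (N + 1 : ℕ) := by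
        rw [majorantCoeff]
        gcongr
    _ = 1352 / ((N + 1 : ℕ) : ℝ) := by field_simp

lemma sum_majorantCoeff_mul_eR (N : ℕ) (t : ℝ) :
    ∑ h ∈ Icc (-(N : ℤ)) N, (majorantCoeff N h : ℂ) * eR (t * h) =
      (1352 / ((N + 1 : ℕ) : ℝ) ^ 2 *
        ‖aeval (eR t) (dampedGeomPoly (N + 1))‖ ^ 2 : ℝ) := by
  rw [Complex.ofReal_mul, ← sum_autocorr_mul_zpow (natDegree_dampedGeomPoly_le (N + 1))
    (norm_eR t), mul_sum]
  refine sum_congr rfl fun h _ => ?_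
  rw [majorantCoeff, Complex.ofReal_mul, mul_assoc, eR_mul_intCast]

lemma sawtooth_sub_sum_sawtoothCoeff_mul_eR (N : ℕ) (t : ℝ) :
    (sawtooth t : ℂ) - ∑ h ∈ (Icc (-(N : ℤ)) N).erase 0, sawtoothCoeff N h * eR (t * h) =
      sawtoothError (jacksonPoly (N / 2 + 1)) N (Int.fract t) := by
  have hsymm : ∀ h ∈ (Icc (-(N : ℤ)) N).erase 0, -h ∈ (Icc (-(N : ℤ)) N).erase 0 := fun h hh => by
    simp only [mem_erase, mem_Icc] at hh ⊢
    lia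
  have hsum := sum_div_mul_I_mul_eR hsymm
    (normalizedAutocorr_neg (jacksonPoly (N / 2 + 1))) (Int.fract t)
  simp only [eR_mul_intCast, eR_fract] at hsum
  simp only [eR_mul_intCast, sawtoothCoeff, hsum]
  rw [sub_neg_eq_add, ← Complex.ofReal_add]
  rfl

/-- Vaaler's approximation of the sawtooth function by trigonometric polynomials. -/
theorem vaaler_approximation :
    ∃ C : ℝ, 0 < C ∧ ∀ H : ℝ, 1 ≤ H →
      ∃ a : ℤ → ℂ, ∃ b : ℤ → ℝ,
        (∀ h : ℤ, h ≠ 0 → |(h : ℝ)| ≤ H → ‖a h‖ ≤ C / |(h : ℝ)|) ∧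
        (∀ h : ℤ, |(h : ℝ)| ≤ H → 0 ≤ b h ∧ b h ≤ C / H) ∧
        ∀ t : ℝ,
          (∑ h ∈ Finset.Icc (-⌊H⌋) ⌊H⌋, (b h : ℂ) * eR (t * h)).im = 0 ∧
          0 ≤ (∑ h ∈ Finset.Icc (-⌊H⌋) ⌊H⌋, (b h : ℂ) * eR (t * h)).re ∧
          ‖(sawtooth t : ℂ) -
              ∑ h ∈ (Finset.Icc (-⌊H⌋) ⌊H⌋).erase 0, a h * eR (t * h)‖ ≤
            (∑ h ∈ Finset.Icc (-⌊H⌋) ⌊H⌋, (b h : ℂ) * eR (t * h)).re := by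
  refine ⟨1352, by norm_num, fun H hH => ?_⟩
  obtain ⟨N, hN⟩ := Int.eq_ofNat_of_zero_le (Int.floor_nonneg.2 (zero_le_one.trans hH))
  have hHN : H ≤ (N + 1 : ℕ) := by
    have := (Int.lt_floor_add_one H).le
    rw [hN] at this
    exact_mod_cast this
  rw [hN]
  refine ⟨sawtoothCoeff N, majorantCoeff N, fun h _ _ => ?_, fun h _ => ?_, fun t => ?_⟩
  · exact (norm_sawtoothCoeff_le N h).trans (by gcongr; norm_num)
  · exact ⟨majorantCoeff_nonneg N h, (majorantCoeff_le N h).trans (by gcongr)⟩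
  · rw [sum_majorantCoeff_mul_eR, Complex.ofReal_im, Complex.ofReal_re,
      sawtooth_sub_sum_sawtoothCoeff_mul_eR, Complex.norm_real, Real.norm_eq_abs, ← eR_fract]
    exact ⟨rfl, by positivity, abs_sawtoothError_jacksonPoly_le_dampedGeomPoly (by lia)
      N.succ_ne_zero (by lia) (Int.fract_nonneg t) (Int.fract_lt_one t).le⟩
end

section
/- (Srinivasan) Let m, n be positive integers, and let A_1, …, A_m, B_1, …, B_n, a_1, …, a_m, b_1, …, b_n be positive real numbers. Define L(H) := Σ_{i=1}^m A_i H^{a_i} + Σ_{j=1}^n B_j H^{−b_j} for H > 0. Then for any real numbers 0 < H_1 ≤ H_2 there exist H with H_1 ≤ H ≤ H_2 and a constant C depending only on m and n such that L(H) ≤ C ( Σ_{i=1}^m A_i H_1^{a_i} + Σ_{j=1}^n B_j H_2^{−b_j} + Σ_{i=1}^m Σ_{j=1}^n (A_i^{b_j} B_j^{a_i})^{1/(a_i + b_j)} ). -/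
open Finset

/-!
Write `P H = ∑ A_i H^{a_i}` and `Q H = ∑ B_j H^{-b_j}`. Either `Q ≤ P` at `H₁`, or `P ≤ Q` at `H₂`,
or the two functions agree at some intermediate point. So there is an `H` at which `max (P H) (Q H)`
is at most `P H₁`, `Q H₂` or `min (P H) (Q H)`. On the other hand, at every `H`, subadditivity of
the minimum on nonnegative numbers bounds `min (P H) (Q H)` by the double sum of the minima
`min (A_i H^{a_i}) (B_j H^{-b_j})`, and each of these is at most the common value
`(A_i^{b_j} B_j^{a_i})^{1/(a_i+b_j)}` of the increasing and the decreasing power where they cross.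
As `P + Q = max P Q + min P Q`, the constant `2` suffices for all `m` and `n`.
-/

section MinSubadditive

variable {M : Type*} [LinearOrder M]

lemma min_add_le_min_add_min [AddZeroClass M] [AddLeftMono M] [AddRightMono M] {x y z : M}
    (hx : 0 ≤ x) (hy : 0 ≤ y) (hz : 0 ≤ z) : min x (y + z) ≤ min x y + min x z := by
  rcases le_total x y with hxy | hyx
  · rw [min_eq_left hxy]
    exact (min_le_left _ _).trans (le_add_of_nonneg_right (le_min hx hz))
  rcases le_total x z with hxz | hzx
  · rw [min_eq_left hxz]
    exact (min_le_left _ _).trans (le_add_of_nonneg_left (le_min hx hy))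
  · rw [min_eq_right hyx, min_eq_right hzx]
    exact min_le_right _ _

variable [AddCommMonoid M] [IsOrderedAddMonoid M] {ι κ : Type*} {s : Finset ι} {t : Finset κ}
  {p : ι → M} {q : κ → M}

lemma min_sum_le_sum_min {x : M} (hx : 0 ≤ x) (hq : ∀ j ∈ t, 0 ≤ q j) :
    min x (∑ j ∈ t, q j) ≤ ∑ j ∈ t, min x (q j) :=
  le_sum_of_subadditive_on_pred (min x) (0 ≤ ·) (min_le_right _ _)
    (fun _ _ ↦ min_add_le_min_add_min hx) (fun _ _ ↦ add_nonneg) q hq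

lemma min_sum_sum_le_sum_sum_min (hp : ∀ i ∈ s, 0 ≤ p i) (hq : ∀ j ∈ t, 0 ≤ q j) :
    min (∑ i ∈ s, p i) (∑ j ∈ t, q j) ≤ ∑ i ∈ s, ∑ j ∈ t, min (p i) (q j) :=
  calc min (∑ i ∈ s, p i) (∑ j ∈ t, q j)
      ≤ ∑ i ∈ s, min (p i) (∑ j ∈ t, q j) := by
        simpa only [min_comm] using min_sum_le_sum_min (sum_nonneg hq) hp
    _ ≤ ∑ i ∈ s, ∑ j ∈ t, min (p i) (q j) :=
        sum_le_sum fun i hi ↦ min_sum_le_sum_min (hp i hi) hq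

end MinSubadditive

lemma exists_mem_max_le_max_min_of_isPreconnected {X α : Type*} [TopologicalSpace X] [LinearOrder α]
    [TopologicalSpace α] [OrderClosedTopology α] {s : Set X} (hs : IsPreconnected s) {x y : X}
    (hx : x ∈ s) (hy : y ∈ s) {f g : X → α} (hf : ContinuousOn f s) (hg : ContinuousOn g s) :
    ∃ z ∈ s, max (f z) (g z) ≤ max (max (f x) (g y)) (min (f z) (g z)) := by
  rcases le_total (g x) (f x) with hgf | hfg
  · exact ⟨x, hx, by simp [hgf]⟩
  rcases le_total (f y) (g y) with hfg' | hgf'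
  · exact ⟨y, hy, by simp [hfg']⟩
  obtain ⟨z, hz, hfgz⟩ := hs.intermediate_value₂ hx hy hf hg hfg hgf'
  exact ⟨z, hz, by simp [hfgz]⟩

lemma min_mul_rpow_le {A B a b H : ℝ} (hA : 0 ≤ A) (hB : 0 ≤ B) (ha : 0 ≤ a) (hb : 0 ≤ b)
    (hab : 0 < a + b) (hH : 0 < H) :
    min (A * H ^ a) (B * H ^ (-b)) ≤ (A ^ b * B ^ a) ^ (1 / (a + b)) := by
  set μ := min (A * H ^ a) (B * H ^ (-b))
  have hμ : 0 ≤ μ := le_min (by positivity) (by positivity)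
  rw [one_div, Real.le_rpow_inv_iff_of_pos hμ (by positivity) hab]
  calc μ ^ (a + b) = μ ^ b * μ ^ a := by rw [add_comm, Real.rpow_add_of_nonneg hμ hb ha]
    _ ≤ (A * H ^ a) ^ b * (B * H ^ (-b)) ^ a := by
      gcongr
      exacts [min_le_left _ _, min_le_right _ _]
    _ = A ^ b * B ^ a * (H ^ (a * b) * H ^ (-b * a)) := by
      rw [Real.mul_rpow hA (by positivity), Real.mul_rpow hB (by positivity),
        ← Real.rpow_mul hH.le, ← Real.rpow_mul hH.le]
      ring
    _ = A ^ b * B ^ a := by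
      rw [← Real.rpow_add hH, show a * b + -b * a = 0 by ring, Real.rpow_zero, mul_one]

lemma continuousOn_sum_mul_rpow {ι : Type*} (s : Finset ι) (A a : ι → ℝ) :
    ContinuousOn (fun H : ℝ ↦ ∑ i ∈ s, A i * H ^ a i) (Set.Ioi 0) :=
  continuousOn_finsetSum _ fun _ _ ↦ continuousOn_const.mul <|
    continuousOn_id.rpow_const fun _ hH ↦ .inl (ne_of_gt hH)

lemma sum_mul_rpow_nonneg {ι : Type*} {s : Finset ι} {A a : ι → ℝ} (hA : ∀ i ∈ s, 0 ≤ A i)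
    {H : ℝ} (hH : 0 ≤ H) : 0 ≤ ∑ i ∈ s, A i * H ^ a i :=
  sum_nonneg fun i hi ↦ mul_nonneg (hA i hi) (Real.rpow_nonneg hH _)

section RpowSums

variable {ι κ : Type*} {s : Finset ι} {t : Finset κ} {A a : ι → ℝ} {B b : κ → ℝ}

lemma min_sum_mul_rpow_le (hA : ∀ i ∈ s, 0 ≤ A i) (ha : ∀ i ∈ s, 0 < a i)
    (hB : ∀ j ∈ t, 0 ≤ B j) (hb : ∀ j ∈ t, 0 < b j) {H : ℝ} (hH : 0 < H) :
    min (∑ i ∈ s, A i * H ^ a i) (∑ j ∈ t, B j * H ^ (-b j)) ≤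
      ∑ i ∈ s, ∑ j ∈ t, (A i ^ b j * B j ^ a i) ^ (1 / (a i + b j)) :=
  calc min (∑ i ∈ s, A i * H ^ a i) (∑ j ∈ t, B j * H ^ (-b j))
      ≤ ∑ i ∈ s, ∑ j ∈ t, min (A i * H ^ a i) (B j * H ^ (-b j)) :=
        min_sum_sum_le_sum_sum_min
          (fun i hi ↦ mul_nonneg (hA i hi) (Real.rpow_nonneg hH.le _))
          (fun j hj ↦ mul_nonneg (hB j hj) (Real.rpow_nonneg hH.le _))
    _ ≤ ∑ i ∈ s, ∑ j ∈ t, (A i ^ b j * B j ^ a i) ^ (1 / (a i + b j)) :=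
        sum_le_sum fun i hi ↦ sum_le_sum fun j hj ↦
          min_mul_rpow_le (hA i hi) (hB j hj) (ha i hi).le (hb j hj).le
            (add_pos (ha i hi) (hb j hj)) hH

theorem srinivasan_optimization_general (hA : ∀ i ∈ s, 0 ≤ A i) (ha : ∀ i ∈ s, 0 < a i)
    (hB : ∀ j ∈ t, 0 ≤ B j) (hb : ∀ j ∈ t, 0 < b j) {H₁ H₂ : ℝ} (hH₁ : 0 < H₁) (hH : H₁ ≤ H₂) :
    ∃ H, H₁ ≤ H ∧ H ≤ H₂ ∧
      ∑ i ∈ s, A i * H ^ a i + ∑ j ∈ t, B j * H ^ (-b j) ≤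
        2 * (∑ i ∈ s, A i * H₁ ^ a i + ∑ j ∈ t, B j * H₂ ^ (-b j) +
          ∑ i ∈ s, ∑ j ∈ t, (A i ^ b j * B j ^ a i) ^ (1 / (a i + b j))) := by
  set P : ℝ → ℝ := fun H ↦ ∑ i ∈ s, A i * H ^ a i
  set Q : ℝ → ℝ := fun H ↦ ∑ j ∈ t, B j * H ^ (-b j)
  set S := ∑ i ∈ s, ∑ j ∈ t, (A i ^ b j * B j ^ a i) ^ (1 / (a i + b j))
  have hIcc : Set.Icc H₁ H₂ ⊆ Set.Ioi 0 := fun _ hx ↦ hH₁.trans_le hx.1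
  obtain ⟨H, hHmem, hmax⟩ := exists_mem_max_le_max_min_of_isPreconnected isPreconnected_Icc
    (Set.left_mem_Icc.2 hH) (Set.right_mem_Icc.2 hH)
    ((continuousOn_sum_mul_rpow s A a).mono hIcc)
    ((continuousOn_sum_mul_rpow t B fun j ↦ -b j).mono hIcc)
  have hmin : min (P H) (Q H) ≤ S := min_sum_mul_rpow_le hA ha hB hb (hIcc hHmem)
  have hP : 0 ≤ P H₁ := sum_mul_rpow_nonneg hA hH₁.le
  have hQ : 0 ≤ Q H₂ := sum_mul_rpow_nonneg hB (hH₁.le.trans hH)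
  have hH₀ : 0 ≤ H := (hIcc hHmem).le
  have hS : 0 ≤ S :=
    (le_min (sum_mul_rpow_nonneg hA hH₀) (sum_mul_rpow_nonneg hB hH₀)).trans hmin
  refine ⟨H, hHmem.1, hHmem.2, ?_⟩
  calc P H + Q H = max (P H) (Q H) + min (P H) (Q H) := (max_add_min _ _).symm
    _ ≤ max (max (P H₁) (Q H₂)) S + S := add_le_add (hmax.trans (max_le_max_left _ hmin)) hmin
    _ ≤ (P H₁ + Q H₂ + S) + S := by
      gcongr
      exact max_le (max_le (by linarith) (by linarith)) (by linarith)
    _ ≤ 2 * (P H₁ + Q H₂ + S) := by linarith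

end RpowSums

/-- Srinivasan's optimization lemma: for
`L(H) = Σ_i A_i H^{a_i} + Σ_j B_j H^{-b_j}` with positive data, there is an
`H ∈ [H₁, H₂]` with
`L(H) ≪ Σ_i A_i H₁^{a_i} + Σ_j B_j H₂^{-b_j} + Σ_{i,j} (A_i^{b_j} B_j^{a_i})^{1/(a_i+b_j)}`,
the implied constant depending only on `m` and `n`. -/
theorem srinivasan_optimization (m n : ℕ) (hm : 0 < m) (hn : 0 < n) :
    ∃ C : ℝ, 0 < C ∧ ∀ A B : ℕ → ℝ, ∀ a b : ℕ → ℝ,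
      (∀ i ∈ Finset.range m, 0 < A i ∧ 0 < a i) →
      (∀ j ∈ Finset.range n, 0 < B j ∧ 0 < b j) →
      ∀ H₁ H₂ : ℝ, 0 < H₁ → H₁ ≤ H₂ →
      ∃ H : ℝ, H₁ ≤ H ∧ H ≤ H₂ ∧
        (∑ i ∈ Finset.range m, A i * H ^ (a i)
          + ∑ j ∈ Finset.range n, B j * H ^ (-(b j))) ≤
        C * (∑ i ∈ Finset.range m, A i * H₁ ^ (a i)
          + ∑ j ∈ Finset.range n, B j * H₂ ^ (-(b j))
          + ∑ i ∈ Finset.range m, ∑ j ∈ Finset.range n,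
              ((A i) ^ (b j) * (B j) ^ (a i)) ^ (1 / (a i + b j))) :=
  ⟨2, two_pos, fun _ _ _ _ hA hB _ _ hH₁ hH ↦ srinivasan_optimization_general
    (fun i hi ↦ (hA i hi).1.le) (fun i hi ↦ (hA i hi).2)
    (fun j hj ↦ (hB j hj).1.le) (fun j hj ↦ (hB j hj).2) hH₁ hH⟩
end

section
/- (Spacing lemma of Fouvry–Iwaniec) Let α, β be real numbers with αβ ≠ 0. There is a constant C depending only on α and β such that for all Δ > 0 and all real M ≥ 1, N ≥ 1, the number 𝔄(M, N; Δ) of quadruples (m, m̃, n, ñ) of positive integers with m ∼ M, m̃ ∼ M, n ∼ N, ñ ∼ N and |(m̃/m)^α − (ñ/n)^β| < Δ satisfies 𝔄(M, N; Δ) ≤ C ( M N log(2MN) + Δ M^2 N^2 ). -/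
open Finset

/-!
Sort the quadruples by `d = gcd(m, m̃)` and `e = gcd(n, ñ)`. Distinct fractions `m̃/m` with the same
`d` differ by at least `d²/(4M²)`, and `x ↦ x ^ α` contracts distances in `[1/2, 2]` by at most a
constant factor, so each of the `≪ (N/e)²` pairs `(n, ñ)` is met by `≪ 1 + Δ(M/d)²` pairs `(m, m̃)`.
Exchanging the two roles, the `(d, e)` class has `≪ min((M/d)², (N/e)²) + Δ(M/d)²(N/e)²` members.
For fixed `d` the minimum sums over `e` to `≪ (M/d)N`, and the harmonic sum over `d` gives the
logarithm.
-/

lemma exists_antilipschitzWith_rpow {s : Set ℝ} (hs : IsCompact s) (hpos : s ⊆ Set.Ioi 0) {p : ℝ}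
    (hp : p ≠ 0) : ∃ K, AntilipschitzWith K (s.domRestrict fun x : ℝ ↦ x ^ p) := by
  have himage : IsCompact ((fun x : ℝ ↦ x ^ p) '' s) :=
    hs.image_of_continuousOn fun x hx ↦
      (Real.continuousAt_rpow_const x p (.inl (hpos hx).ne')).continuousWithinAt
  have hinv : LocallyLipschitzOn ((fun x : ℝ ↦ x ^ p) '' s) fun t : ℝ ↦ t ^ p⁻¹ := by
    rintro _ ⟨x, hx, rfl⟩
    obtain ⟨K, u, hu, hK⟩ := (Real.contDiffAt_rpow_const_of_ne (n := 1) (p := p⁻¹)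
      (Real.rpow_pos_of_pos (hpos hx) p).ne').exists_lipschitzOnWith
    exact ⟨K, u, mem_nhdsWithin_of_mem_nhds hu, hK⟩
  obtain ⟨K, hK⟩ := hinv.exists_lipschitzOnWith_of_compact himage
  refine ⟨K, fun x y ↦ ?_⟩
  simpa only [Real.rpow_rpow_inv (hpos x.2).le hp, Real.rpow_rpow_inv (hpos y.2).le hp] using!
    hK (Set.mem_image_of_mem _ x.2) (Set.mem_image_of_mem _ y.2)

section Counting

variable {ι κ : Type*}

lemma card_le_one_add_div_of_pairwise_le_abs_sub {S : Finset ι} {f : ι → ℝ} {s L : ℝ}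
    (hs : 0 < s) (hL : 0 ≤ L) (hsep : (S : Set ι).Pairwise fun i j ↦ s ≤ |f i - f j|)
    (hdiam : ∀ i ∈ S, ∀ j ∈ S, |f i - f j| ≤ L) : (#S : ℝ) ≤ 1 + L / s := by
  obtain rfl | hS := S.eq_empty_or_nonempty
  · simp only [card_empty, Nat.cast_zero]
    positivity
  obtain ⟨k, hk, hmin⟩ := S.exists_min_image f hS
  have hnonneg : ∀ i ∈ S, 0 ≤ (f i - f k) / s := fun i hi ↦
    div_nonneg (sub_nonneg.2 (hmin i hi)) hs.le
  have hmaps : Set.MapsTo (fun i ↦ ⌊(f i - f k) / s⌋₊) S (range (⌊L / s⌋₊ + 1)) := by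
    intro i hi
    simp only [coe_range, Set.mem_Iio, Nat.lt_add_one_iff]
    gcongr
    exact (le_abs_self _).trans (hdiam i hi k hk)
  have hinj : Set.InjOn (fun i ↦ ⌊(f i - f k) / s⌋₊) S := by
    intro i hi j hj hij
    by_contra hne
    have hfloor : ⌊(f i - f k) / s⌋ = ⌊(f j - f k) / s⌋ := by
      rw [← Int.natCast_floor_eq_floor (hnonneg i hi), ← Int.natCast_floor_eq_floor (hnonneg j hj)]
      exact congrArg Nat.cast hij
    have hlt := Int.abs_sub_lt_one_of_floor_eq_floor hfloor
    rw [← sub_div, sub_sub_sub_cancel_right, abs_div, abs_of_pos hs, div_lt_one hs] at hlt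
    exact (hsep hi hj hne).not_gt hlt
  calc (#S : ℝ) ≤ (⌊L / s⌋₊ + 1 : ℕ) := by
        exact_mod_cast (card_le_card_of_injOn _ hmaps hinj).trans_eq (card_range _)
    _ ≤ 1 + L / s := by
        push_cast
        linarith [Nat.floor_le (div_nonneg hL hs.le)]

lemma card_filter_product_le_card_mul (S : Finset ι) (T : Finset κ) (r : ι → κ → Prop)
    [∀ i j, Decidable (r i j)] {B : ℝ} (hB : ∀ j ∈ T, (#{i ∈ S | r i j} : ℝ) ≤ B) :
    (#{x ∈ S ×ˢ T | r x.1 x.2} : ℝ) ≤ #T * B := by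
  have hcard : #{x ∈ S ×ˢ T | r x.1 x.2} = ∑ j ∈ T, #{i ∈ S | r i j} := by
    simp only [card_filter, sum_product_right]
  rw [hcard, Nat.cast_sum, ← nsmul_eq_mul]
  exact sum_le_card_nsmul T _ B hB

end Counting

section Fractions

variable {a b a' b' d : ℕ}

lemma eq_and_eq_of_mul_eq_mul_of_gcd_eq (ha : a ≠ 0) (hgcd : a.gcd b = a'.gcd b')
    (h : b * a' = b' * a) : a = a' ∧ b = b' := by
  have haa' : a = a' := by
    refine Nat.eq_of_mul_eq_mul_right (Nat.gcd_pos_of_pos_left b ha.bot_lt) ?_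
    calc a * a.gcd b = (a * a').gcd (a * b') := by rw [hgcd, Nat.gcd_mul_left]
      _ = (a' * a).gcd (a' * b) := by rw [mul_comm a a', mul_comm a b', ← h, mul_comm b a']
      _ = a' * a.gcd b := Nat.gcd_mul_left ..
  subst haa'
  exact ⟨rfl, Nat.eq_of_mul_eq_mul_right ha.bot_lt h⟩

lemma sq_div_mul_le_abs_div_sub_div (ha : a ≠ 0) (ha' : a' ≠ 0) (hda : d ∣ a) (hdb : d ∣ b)
    (hda' : d ∣ a') (hdb' : d ∣ b') (hne : b * a' ≠ b' * a) :
    (d : ℝ) ^ 2 / (a * a') ≤ |(b : ℝ) / a - b' / a'| := by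
  have hdvd : (d : ℤ) ^ 2 ∣ (b : ℤ) * a' - b' * a := by
    rw [sq]
    exact dvd_sub (by exact_mod_cast mul_dvd_mul hdb hda') (by exact_mod_cast mul_dvd_mul hdb' hda)
  have hnum : (d : ℤ) ^ 2 ≤ |(b : ℤ) * a' - b' * a| :=
    Int.le_of_dvd (abs_pos.2 (sub_ne_zero.2 (by exact_mod_cast hne))) ((dvd_abs _ _).2 hdvd)
  have ha₀ : (0 : ℝ) < a := by positivity
  have ha'₀ : (0 : ℝ) < a' := by positivity
  rw [div_sub_div _ _ ha₀.ne' ha'₀.ne', mul_comm (a : ℝ) b', abs_div, abs_of_pos (mul_pos ha₀ ha'₀)]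
  gcongr
  exact_mod_cast hnum

end Fractions

section Sums

lemma sum_div_natCast_sq (A : ℝ) (s : Finset ℕ) :
    ∑ d ∈ s, (A / d) ^ 2 = A ^ 2 * ∑ d ∈ s, ((d : ℝ) ^ 2)⁻¹ := by
  simp only [div_pow, mul_sum, ← div_eq_mul_inv]

lemma sum_Icc_div_sq_le (A : ℝ) (n : ℕ) : ∑ d ∈ Icc 1 n, (A / d) ^ 2 ≤ 2 * A ^ 2 := by
  have hbasel : ∑ d ∈ Icc 1 n, ((d : ℝ) ^ 2)⁻¹ ≤ 2 := by
    have h := sum_Ioo_inv_sq_le (α := ℝ) 0 (n + 1)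
    rw [Ioo_add_one_right_eq_Ioc, ← Icc_add_one_left_eq_Ioc] at h
    simpa using h
  rw [sum_div_natCast_sq, mul_comm]
  gcongr

lemma sum_Icc_min_sq_div_sq_le {A B : ℝ} (hA : 0 < A) (hB : 0 < B) (n : ℕ) :
    ∑ e ∈ Icc 1 n, min (A ^ 2) ((B / e) ^ 2) ≤ 3 * (A * B) := by
  -- The two arguments of the minimum cross at `e = B / A`.
  set k := ⌊B / A⌋₊
  have hk : (k : ℝ) ≤ B / A := Nat.floor_le (by positivity)
  have hk' : B / A ≤ k + 1 := (Nat.lt_floor_add_one _).le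
  have hsub : Icc 1 n ⊆ Icc 1 k ∪ Ioo k (n + 1) := by
    intro e
    simp only [mem_union, mem_Icc, mem_Ioo]
    omega
  have hdisj : Disjoint (Icc 1 k) (Ioo k (n + 1)) := by
    simp only [disjoint_left, mem_Icc, mem_Ioo]
    omega
  calc ∑ e ∈ Icc 1 n, min (A ^ 2) ((B / e) ^ 2)
      ≤ ∑ e ∈ Icc 1 k ∪ Ioo k (n + 1), min (A ^ 2) ((B / e) ^ 2) :=
        sum_le_sum_of_subset_of_nonneg hsub fun e _ _ ↦ by positivity
    _ = ∑ e ∈ Icc 1 k, min (A ^ 2) ((B / e) ^ 2) +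
        ∑ e ∈ Ioo k (n + 1), min (A ^ 2) ((B / e) ^ 2) := sum_union hdisj
    _ ≤ ∑ e ∈ Icc 1 k, A ^ 2 + ∑ e ∈ Ioo k (n + 1), (B / e) ^ 2 := by
        gcongr
        · exact min_le_left _ _
        · exact min_le_right _ _
    _ = k * A ^ 2 + B ^ 2 * ∑ e ∈ Ioo k (n + 1), ((e : ℝ) ^ 2)⁻¹ := by
        rw [sum_const, Nat.card_Icc, Nat.add_sub_cancel, nsmul_eq_mul, sum_div_natCast_sq]
    _ ≤ B / A * A ^ 2 + B ^ 2 * (2 / (B / A)) := by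
        gcongr
        exact (sum_Ioo_inv_sq_le k (n + 1)).trans (by gcongr)
    _ = 3 * (A * B) := by
        field_simp
        ring

lemma sum_sum_min_div_sq_le {M N : ℝ} (hM : 1 ≤ M) (hN : 1 ≤ N) (n : ℕ) :
    ∑ d ∈ Icc 1 ⌊2 * M⌋₊, ∑ e ∈ Icc 1 n, min ((M / d) ^ 2) ((N / e) ^ 2) ≤
      9 * (M * N * Real.log (2 * M * N)) := by
  have hharmonic : ∑ d ∈ Icc 1 ⌊2 * M⌋₊, (d : ℝ)⁻¹ ≤ 1 + Real.log (2 * M) := by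
    simpa only [harmonic_eq_sum_Icc, Rat.cast_sum, Rat.cast_inv, Rat.cast_natCast] using
      harmonic_floor_le_one_add_log (2 * M) (by linarith)
  have hlogM : Real.log (2 * M) ≤ Real.log (2 * M * N) :=
    Real.log_le_log (by positivity) (le_mul_of_one_le_right (by positivity) hN)
  have hlog2 : Real.log 2 ≤ Real.log (2 * M) := Real.log_le_log two_pos (by linarith)
  calc ∑ d ∈ Icc 1 ⌊2 * M⌋₊, ∑ e ∈ Icc 1 n, min ((M / d) ^ 2) ((N / e) ^ 2)
      ≤ ∑ d ∈ Icc 1 ⌊2 * M⌋₊, 3 * (M / d * N) := by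
        refine sum_le_sum fun d hd ↦ sum_Icc_min_sq_div_sq_le ?_ (by positivity) n
        have hd₀ : 0 < d := (mem_Icc.1 hd).1
        positivity
    _ = 3 * (M * N) * ∑ d ∈ Icc 1 ⌊2 * M⌋₊, (d : ℝ)⁻¹ := by
        rw [mul_sum]
        exact sum_congr rfl fun d _ ↦ by ring
    _ ≤ 3 * (M * N) * (3 * Real.log (2 * M * N)) := by
        gcongr
        linarith [Real.log_two_gt_d9]
    _ = 9 * (M * N * Real.log (2 * M * N)) := by ring

end Sums

section DyadicPairs

variable {M : ℝ} {d : ℕ} {p q : ℕ × ℕ}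

/-- The pairs of integers `m, m̃ ∼ M` with greatest common divisor `d`. -/
noncomputable def dyadicPairs (M : ℝ) (d : ℕ) : Finset (ℕ × ℕ) :=
  {p ∈ Ioc ⌊M⌋₊ ⌊2 * M⌋₊ ×ˢ Ioc ⌊M⌋₊ ⌊2 * M⌋₊ | p.1.gcd p.2 = d}

lemma mem_dyadicPairs (hM : 0 ≤ M) :
    p ∈ dyadicPairs M d ↔
      ((M < p.1 ∧ p.1 ≤ 2 * M) ∧ M < p.2 ∧ p.2 ≤ 2 * M) ∧ p.1.gcd p.2 = d := by
  simp only [dyadicPairs, mem_filter, mem_product, mem_Ioc, Nat.floor_lt hM,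
    Nat.le_floor_iff (mul_nonneg zero_le_two hM)]

lemma div_mem_Icc_of_mem_dyadicPairs (hM : 0 ≤ M) (hp : p ∈ dyadicPairs M d) :
    (p.2 : ℝ) / p.1 ∈ Set.Icc (1 / 2 : ℝ) 2 := by
  obtain ⟨⟨⟨h₁, h₁'⟩, h₂, h₂'⟩, -⟩ := (mem_dyadicPairs hM).1 hp
  have hpos : (0 : ℝ) < p.1 := hM.trans_lt h₁
  rw [Set.mem_Icc, le_div_iff₀ hpos, div_le_iff₀ hpos]
  constructor <;> linarith

lemma card_dyadicPairs_le (hM : 0 ≤ M) (d : ℕ) : (#(dyadicPairs M d) : ℝ) ≤ 4 * (M / d) ^ 2 := by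
  have hsub : dyadicPairs M d ⊆
      {m ∈ Ioc 0 ⌊2 * M⌋₊ | d ∣ m} ×ˢ {m ∈ Ioc 0 ⌊2 * M⌋₊ | d ∣ m} := by
    intro p hp
    simp only [dyadicPairs, mem_filter, mem_product, mem_Ioc] at hp ⊢
    obtain ⟨⟨⟨h₁, h₁'⟩, h₂, h₂'⟩, rfl⟩ := hp
    exact ⟨⟨⟨h₁.pos, h₁'⟩, Nat.gcd_dvd_left _ _⟩, ⟨h₂.pos, h₂'⟩, Nat.gcd_dvd_right _ _⟩
  have hdiv : ((⌊2 * M⌋₊ / d : ℕ) : ℝ) ≤ 2 * M / d :=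
    Nat.cast_div_le.trans (by gcongr; exact Nat.floor_le (by positivity))
  calc (#(dyadicPairs M d) : ℝ) ≤ ((⌊2 * M⌋₊ / d : ℕ) : ℝ) * (⌊2 * M⌋₊ / d : ℕ) := by
        have h := card_le_card hsub
        rw [card_product, Nat.Ioc_filter_dvd_card_eq_div] at h
        exact_mod_cast h
    _ ≤ 2 * M / d * (2 * M / d) := by gcongr
    _ = 4 * (M / d) ^ 2 := by ring

lemma sq_div_le_abs_div_sub_div_of_mem_dyadicPairs (hM : 0 ≤ M) (hp : p ∈ dyadicPairs M d)
    (hq : q ∈ dyadicPairs M d) (hpq : p ≠ q) :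
    (d : ℝ) ^ 2 / (4 * M ^ 2) ≤ |(p.2 : ℝ) / p.1 - q.2 / q.1| := by
  obtain ⟨⟨⟨hp₁, hp₁'⟩, -⟩, hp_gcd⟩ := (mem_dyadicPairs hM).1 hp
  obtain ⟨⟨⟨hq₁, hq₁'⟩, -⟩, hq_gcd⟩ := (mem_dyadicPairs hM).1 hq
  have hp₀ : p.1 ≠ 0 := by exact_mod_cast (hM.trans_lt hp₁).ne'
  have hq₀ : q.1 ≠ 0 := by exact_mod_cast (hM.trans_lt hq₁).ne'
  have hne : p.2 * q.1 ≠ q.2 * p.1 := fun h ↦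
    hpq (Prod.ext_iff.2 (eq_and_eq_of_mul_eq_mul_of_gcd_eq hp₀ (hp_gcd.trans hq_gcd.symm) h))
  calc (d : ℝ) ^ 2 / (4 * M ^ 2) = d ^ 2 / (2 * M * (2 * M)) := by ring
    _ ≤ (d : ℝ) ^ 2 / (p.1 * q.1) := by gcongr
    _ ≤ |(p.2 : ℝ) / p.1 - q.2 / q.1| :=
        sq_div_mul_le_abs_div_sub_div hp₀ hq₀ (hp_gcd ▸ Nat.gcd_dvd_left ..)
          (hp_gcd ▸ Nat.gcd_dvd_right ..) (hq_gcd ▸ Nat.gcd_dvd_left ..)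
          (hq_gcd ▸ Nat.gcd_dvd_right ..) hne

lemma card_filter_dyadicPairs_abs_sub_lt_le {f : ℝ → ℝ} {K : NNReal}
    (hf : AntilipschitzWith K ((Set.Icc (1 / 2 : ℝ) 2).domRestrict f)) (hM : 0 < M) (hd : 0 < d)
    {Δ : ℝ} (hΔ : 0 ≤ Δ) (y : ℝ) :
    (#{p ∈ dyadicPairs M d | |f (p.2 / p.1) - y| < Δ} : ℝ) ≤ 1 + 8 * K * Δ * (M / d) ^ 2 := by
  have hdiam : ∀ p ∈ {p ∈ dyadicPairs M d | |f (p.2 / p.1) - y| < Δ},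
      ∀ q ∈ {p ∈ dyadicPairs M d | |f (p.2 / p.1) - y| < Δ},
        |(p.2 : ℝ) / p.1 - q.2 / q.1| ≤ K * (2 * Δ) := by
    intro p hp q hq
    rw [mem_filter] at hp hq
    calc |(p.2 : ℝ) / p.1 - q.2 / q.1| ≤ K * |f (p.2 / p.1) - f (q.2 / q.1)| :=
          hf.le_mul_dist ⟨_, div_mem_Icc_of_mem_dyadicPairs hM.le hp.1⟩
            ⟨_, div_mem_Icc_of_mem_dyadicPairs hM.le hq.1⟩
      _ ≤ K * (2 * Δ) := by
          gcongr
          have htriangle := abs_sub_le (f (p.2 / p.1)) y (f (q.2 / q.1))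
          rw [abs_sub_comm y] at htriangle
          linarith [hp.2, hq.2]
  calc (#{p ∈ dyadicPairs M d | |f (p.2 / p.1) - y| < Δ} : ℝ)
      ≤ 1 + K * (2 * Δ) / (d ^ 2 / (4 * M ^ 2)) :=
        card_le_one_add_div_of_pairwise_le_abs_sub (by positivity) (by positivity)
          (fun p hp q hq ↦ sq_div_le_abs_div_sub_div_of_mem_dyadicPairs hM.le
            (mem_filter.1 hp).1 (mem_filter.1 hq).1) hdiam
    _ = 1 + 8 * K * Δ * (M / d) ^ 2 := by
        field_simp
        ring

end DyadicPairs

section CloseQuadruples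

variable {f g : ℝ → ℝ} {K L : NNReal} {Δ M N : ℝ} {d e : ℕ}

/-- The quadruples `((m, m̃), (n, ñ))` with `m, m̃ ∼ M`, `n, ñ ∼ N`, `gcd(m, m̃) = d`,
`gcd(n, ñ) = e` and `|f (m̃ / m) - g (ñ / n)| < Δ`; the spacing lemma is the case of powers `f, g`,
summed over `d` and `e`. -/
noncomputable def closeQuadruples (f g : ℝ → ℝ) (Δ M N : ℝ) (d e : ℕ) :
    Finset ((ℕ × ℕ) × ℕ × ℕ) :=
  {x ∈ dyadicPairs M d ×ˢ dyadicPairs N e | |f (x.1.2 / x.1.1) - g (x.2.2 / x.2.1)| < Δ}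

lemma card_closeQuadruples_comm (f g : ℝ → ℝ) (Δ M N : ℝ) (d e : ℕ) :
    #(closeQuadruples f g Δ M N d e) = #(closeQuadruples g f Δ N M e d) :=
  card_equiv (Equiv.prodComm _ _) fun x ↦ by
    simp [closeQuadruples, abs_sub_comm, and_comm (a := x.1 ∈ _)]

lemma card_closeQuadruples_le_right
    (hf : AntilipschitzWith K ((Set.Icc (1 / 2 : ℝ) 2).domRestrict f))
    (hΔ : 0 ≤ Δ) (hM : 0 < M) (hN : 0 ≤ N) (hd : 0 < d) :
    (#(closeQuadruples f g Δ M N d e) : ℝ) ≤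
      4 * (N / e) ^ 2 + 32 * K * (Δ * ((M / d) ^ 2 * (N / e) ^ 2)) := by
  calc (#(closeQuadruples f g Δ M N d e) : ℝ)
      ≤ #(dyadicPairs N e) * (1 + 8 * K * Δ * (M / d) ^ 2) :=
        card_filter_product_le_card_mul _ _
          (fun p q : ℕ × ℕ ↦ |f (p.2 / p.1) - g (q.2 / q.1)| < Δ)
          fun q _ ↦ card_filter_dyadicPairs_abs_sub_lt_le hf hM hd hΔ (g (q.2 / q.1))
    _ ≤ 4 * (N / e) ^ 2 * (1 + 8 * K * Δ * (M / d) ^ 2) := by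
        gcongr
        exact card_dyadicPairs_le hN e
    _ = 4 * (N / e) ^ 2 + 32 * K * (Δ * ((M / d) ^ 2 * (N / e) ^ 2)) := by ring

lemma card_closeQuadruples_le
    (hf : AntilipschitzWith K ((Set.Icc (1 / 2 : ℝ) 2).domRestrict f))
    (hg : AntilipschitzWith L ((Set.Icc (1 / 2 : ℝ) 2).domRestrict g))
    (hΔ : 0 ≤ Δ) (hM : 0 < M) (hN : 0 < N) (hd : 0 < d) (he : 0 < e) :
    (#(closeQuadruples f g Δ M N d e) : ℝ) ≤
      4 * min ((M / d) ^ 2) ((N / e) ^ 2) +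
        32 * (K + L) * (Δ * ((M / d) ^ 2 * (N / e) ^ 2)) := by
  have hright := card_closeQuadruples_le_right (g := g) (e := e) hf hΔ hM hN.le hd
  have hleft := card_closeQuadruples_le_right (g := f) (e := d) hg hΔ hN hM.le he
  rw [card_closeQuadruples_comm, mul_comm ((N / e) ^ 2)] at hleft
  have hK : 0 ≤ K * (Δ * ((M / d) ^ 2 * (N / e) ^ 2)) := by positivity
  have hL : 0 ≤ L * (Δ * ((M / d) ^ 2 * (N / e) ^ 2)) := by positivity
  rcases min_choice ((M / d) ^ 2) ((N / e) ^ 2) with h | h <;> rw [h] <;> linarith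

lemma gcd_mem_Icc_of_mem_Ioc {a b m n : ℕ} (hm : m ∈ Ioc a b) : m.gcd n ∈ Icc 1 b := by
  rw [mem_Ioc] at hm
  exact mem_Icc.2 ⟨Nat.gcd_pos_of_pos_left n hm.1.pos, (Nat.gcd_le_left n hm.1.pos).trans hm.2⟩

lemma card_quadruples_eq_sum_card_closeQuadruples (f g : ℝ → ℝ) (Δ M N : ℝ) :
    #{q ∈ Ioc ⌊M⌋₊ ⌊2 * M⌋₊ ×ˢ Ioc ⌊M⌋₊ ⌊2 * M⌋₊ ×ˢ Ioc ⌊N⌋₊ ⌊2 * N⌋₊ ×ˢ Ioc ⌊N⌋₊ ⌊2 * N⌋₊ |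
        |f (q.2.1 / q.1) - g (q.2.2.2 / q.2.2.1)| < Δ} =
      ∑ d ∈ Icc 1 ⌊2 * M⌋₊, ∑ e ∈ Icc 1 ⌊2 * N⌋₊, #(closeQuadruples f g Δ M N d e) := by
  rw [← sum_product', card_eq_sum_card_fiberwise
    (f := fun q : ℕ × ℕ × ℕ × ℕ ↦ (q.1.gcd q.2.1, q.2.2.1.gcd q.2.2.2))
    (t := Icc 1 ⌊2 * M⌋₊ ×ˢ Icc 1 ⌊2 * N⌋₊)]
  · refine sum_congr rfl fun x _ ↦ card_equiv (Equiv.prodAssoc ℕ ℕ (ℕ × ℕ)).symm fun q ↦ ?_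
    simp only [closeQuadruples, dyadicPairs, mem_filter, mem_product, Equiv.prodAssoc_symm_apply,
      Prod.ext_iff]
    tauto
  · intro q hq
    simp only [coe_filter, mem_product, Set.mem_ofPred_eq] at hq
    exact mem_product.2 ⟨gcd_mem_Icc_of_mem_Ioc hq.1.1, gcd_mem_Icc_of_mem_Ioc hq.1.2.2.1⟩

end CloseQuadruples

theorem fouvry_iwaniec_spacing_general {f g : ℝ → ℝ} {K L : NNReal}
    (hf : AntilipschitzWith K ((Set.Icc (1 / 2 : ℝ) 2).domRestrict f))
    (hg : AntilipschitzWith L ((Set.Icc (1 / 2 : ℝ) 2).domRestrict g))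
    {Δ M N : ℝ} (hΔ : 0 ≤ Δ) (hM : 1 ≤ M) (hN : 1 ≤ N) :
    (#{q ∈ Ioc ⌊M⌋₊ ⌊2 * M⌋₊ ×ˢ Ioc ⌊M⌋₊ ⌊2 * M⌋₊ ×ˢ Ioc ⌊N⌋₊ ⌊2 * N⌋₊ ×ˢ Ioc ⌊N⌋₊ ⌊2 * N⌋₊ |
        |f (q.2.1 / q.1) - g (q.2.2.2 / q.2.2.1)| < Δ} : ℝ) ≤
      (36 + 128 * (K + L)) * (M * N * Real.log (2 * M * N) + Δ * M ^ 2 * N ^ 2) := by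
  have hlog : 0 ≤ M * N * Real.log (2 * M * N) :=
    mul_nonneg (by positivity) (Real.log_nonneg (by nlinarith))
  rw [card_quadruples_eq_sum_card_closeQuadruples, Nat.cast_sum]
  simp only [Nat.cast_sum]
  calc ∑ d ∈ Icc 1 ⌊2 * M⌋₊, ∑ e ∈ Icc 1 ⌊2 * N⌋₊, (#(closeQuadruples f g Δ M N d e) : ℝ)
      ≤ ∑ d ∈ Icc 1 ⌊2 * M⌋₊, ∑ e ∈ Icc 1 ⌊2 * N⌋₊, (4 * min ((M / d) ^ 2) ((N / e) ^ 2) +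
          32 * (K + L) * (Δ * ((M / d) ^ 2 * (N / e) ^ 2))) :=
        sum_le_sum fun d hd ↦ sum_le_sum fun e he ↦ card_closeQuadruples_le hf hg hΔ
          (by positivity) (by positivity) (mem_Icc.1 hd).1 (mem_Icc.1 he).1
    _ = 4 * ∑ d ∈ Icc 1 ⌊2 * M⌋₊, ∑ e ∈ Icc 1 ⌊2 * N⌋₊, min ((M / d) ^ 2) ((N / e) ^ 2) +
          32 * (K + L) * (Δ * ((∑ d ∈ Icc 1 ⌊2 * M⌋₊, (M / d) ^ 2) *
            ∑ e ∈ Icc 1 ⌊2 * N⌋₊, (N / e) ^ 2)) := by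
        rw [sum_mul_sum]
        simp only [sum_add_distrib, mul_sum]
    _ ≤ 4 * (9 * (M * N * Real.log (2 * M * N))) +
          32 * (K + L) * (Δ * (2 * M ^ 2 * (2 * N ^ 2))) := by
        gcongr
        · exact sum_sum_min_div_sq_le hM hN _
        · exact sum_Icc_div_sq_le M _
        · exact sum_Icc_div_sq_le N _
    _ = 36 * (M * N * Real.log (2 * M * N)) + 128 * (K + L) * (Δ * M ^ 2 * N ^ 2) := by ring
    _ ≤ (36 + 128 * (K + L)) * (M * N * Real.log (2 * M * N)) +
          (36 + 128 * (K + L)) * (Δ * M ^ 2 * N ^ 2) := by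
        gcongr <;> simp [add_nonneg]
    _ = (36 + 128 * (K + L)) * (M * N * Real.log (2 * M * N) + Δ * M ^ 2 * N ^ 2) := by ring

/-- Spacing lemma of Fouvry–Iwaniec: the number of quadruples
`(m, m̃, n, ñ)` with `m, m̃ ∼ M`, `n, ñ ∼ N` and
`|(m̃/m)^α - (ñ/n)^β| < Δ` is `≪ MN log(2MN) + Δ M²N²`. -/
theorem fouvry_iwaniec_spacing (α β : ℝ) (hαβ : α * β ≠ 0) :
    ∃ C : ℝ, 0 < C ∧ ∀ Δ M N : ℝ, 0 < Δ → 1 ≤ M → 1 ≤ N →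
      (((Finset.Ioc ⌊M⌋₊ ⌊2 * M⌋₊ ×ˢ Finset.Ioc ⌊M⌋₊ ⌊2 * M⌋₊ ×ˢ
          Finset.Ioc ⌊N⌋₊ ⌊2 * N⌋₊ ×ˢ Finset.Ioc ⌊N⌋₊ ⌊2 * N⌋₊).filter
            (fun q : ℕ × ℕ × ℕ × ℕ =>
              |((q.2.1 : ℝ) / (q.1 : ℝ)) ^ α - ((q.2.2.2 : ℝ) / (q.2.2.1 : ℝ)) ^ β| < Δ)).card
          : ℝ) ≤
        C * (M * N * Real.log (2 * M * N) + Δ * M ^ 2 * N ^ 2) := by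
  have hpos : Set.Icc (1 / 2 : ℝ) 2 ⊆ Set.Ioi 0 := fun x hx ↦ one_half_pos.trans_le hx.1
  obtain ⟨K, hK⟩ := exists_antilipschitzWith_rpow isCompact_Icc hpos (left_ne_zero_of_mul hαβ)
  obtain ⟨L, hL⟩ := exists_antilipschitzWith_rpow isCompact_Icc hpos (right_ne_zero_of_mul hαβ)
  exact ⟨36 + 128 * (K + L), by positivity, fun Δ M N hΔ hM hN ↦
    fouvry_iwaniec_spacing_general hK hL hΔ.le hM hN⟩
end
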